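/- arXiv:2605.14669 — 4 statements merged into one kernel-verified Lean document; each statement's English description precedes it below -/
import Mathlib

section
/- Fix real parameters α ≥ 1, a > −1, b > −1 and ε ∈ (0, π/2). Let (P_n)_{n≥0} be a sequence of real polynomials such that for every n: deg P_n = n, ∫_{−1}^{1} P_n(x)·(1−x)^{α·j}·(1−x)^a·(1+x)^b dx = 0 for j = 0, 1, …, n−1, this integral is nonzero for j = n, and P_n(1) = Γ(n + (a+1)/α) / (Γ(n+1)·Γ((a+1)/α)). Then there exists a constant C > 0 such that for all integers n ≥ 1 and all θ ∈ [ε, π−ε]: |P_n(x(θ))| ≤ C · n^{−1/2} · (sin((π−θ)/(1+α)) / sin((π−θ)/(1+1/α)))^n. -/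
open Real Filter Set MeasureTheory

/-- `Th α t = sin t / ((1+α)·sin((π−t)/(1+α)))`; `Th (1/α)` is `Θ_{1/α}`. -/
noncomputable def Th (α t : ℝ) : ℝ :=
  Real.sin t / ((1 + α) * Real.sin ((Real.pi - t) / (1 + α)))

/-- `xval α θ = 1 − 2·Θ_{1/α}(θ)·Θ_α(θ)^{1/α}`. -/
noncomputable def xval (α θ : ℝ) : ℝ :=
  1 - 2 * Th (1/α) θ * (Th α θ) ^ ((1:ℝ)/α)

/-!
Write `x = 1 - 2 * u`, `d = 2 / (1 + α)` and `g = 2 - d`, so that `g / α = d`. By orthogonality the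
Mellin transform of `P n (1 - 2 * u) * (1 - u) ^ b` is explicit, up to normalisation, which gives
the expansion of this function in powers of `u`. Its coefficients combine those of
`(1 - z) ^ (n + b)` with those of a negative power of `1 - z`; expressing the latter as integrals
over a line `Re V = c` and summing the binomial series under the integral sign yields
`2 * π * P n (1 - 2 * u) * (1 - u) ^ b =
  g * Re ∫ V ^ (g - 1 - g * (a + 1) / α) * (1 - u * V ^ (-d)) ^ (n + b) / (1 - V ^ g) ^ (n + 1)`.
For `u` the point of parameter `θ`, the line is taken through the saddle points `arg V = ± σ`, where
`σ = (π - θ) / 2`. There the modulus of `(1 - u * V ^ (-d)) / (1 - V ^ g)` is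
`sin (d * σ) / sin (g * σ)`, and along the line it drops below this value by a Gaussian factor in
`|arg V| - σ`. Integrating the Gaussian produces the factor `n ^ (-1 / 2)`, and all the constants
depend continuously on `σ`, hence are bounded on compact subsets of `(0, π / 2)`.
-/

open scoped Nat Polynomial

section Polynomials

lemma factorial_mul_multichoose (t : ℝ) (n : ℕ) :
    (n ! : ℝ) * Ring.multichoose t n = (ascPochhammer ℝ n).eval t := by
  rw [← nsmul_eq_mul, Ring.factorial_nsmul_multichoose_eq_ascPochhammer,
    Polynomial.ascPochhammer_smeval_eq_eval]

lemma factorial_mul_choose (t : ℝ) (n : ℕ) :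
    (n ! : ℝ) * Ring.choose t n = (ascPochhammer ℝ n).eval (t - n + 1) :=
  factorial_mul_multichoose _ n

lemma multichoose_pos {t : ℝ} (ht : 0 < t) (n : ℕ) : 0 < Ring.multichoose t n := by
  have := factorial_mul_multichoose t n ▸ ascPochhammer_pos n t ht
  exact pos_of_mul_pos_right this (by positivity)

lemma succ_mul_multichoose (t : ℝ) (n : ℕ) :
    (n + 1) * Ring.multichoose t (n + 1) = t * Ring.multichoose (t + 1) n := by
  have h := factorial_mul_multichoose t (n + 1)
  rw [ascPochhammer_succ_left, Polynomial.eval_mul, Polynomial.eval_comp, Nat.factorial_succ] at h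
  simp only [Polynomial.eval_X, Polynomial.eval_add, Polynomial.eval_one,
    ← factorial_mul_multichoose] at h
  push_cast at h
  apply mul_left_cancel₀ (by positivity : (n ! : ℝ) ≠ 0)
  linear_combination h

lemma ascPochhammer_eval_add (m k : ℕ) (t : ℝ) :
    (ascPochhammer ℝ (m + k)).eval t =
      (ascPochhammer ℝ m).eval t * (ascPochhammer ℝ k).eval (t + m) := by
  simp [← ascPochhammer_mul]

lemma ascPochhammer_eval_eq_prod (n : ℕ) (t : ℝ) :
    (ascPochhammer ℝ n).eval t = ∏ i ∈ Finset.range n, (t + i) := by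
  induction n with
  | zero => simp
  | succ n ih => rw [ascPochhammer_succ_eval, ih, Finset.prod_range_succ]

lemma Gamma_add_natCast_eq (n : ℕ) {t : ℝ} (ht : 0 < t) :
    Gamma (t + n) = (ascPochhammer ℝ n).eval t * Gamma t := by
  induction n with
  | zero => simp
  | succ n ih =>
    rw [ascPochhammer_succ_eval, Nat.cast_succ, ← add_assoc, Gamma_add_one (by positivity), ih]
    ring

lemma Gamma_div_eq_multichoose (n : ℕ) {t : ℝ} (ht : 0 < t) :
    Gamma (n + t) / (Gamma (n + 1) * Gamma t) = Ring.multichoose t n := by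
  rw [add_comm, Gamma_add_natCast_eq n ht, Gamma_nat_eq_factorial, ← factorial_mul_multichoose]
  have := (Gamma_pos_of_pos ht).ne'
  field_simp

lemma ascPochhammer_eval_neg_natCast_add (m j : ℕ) :
    (ascPochhammer ℝ m).eval (-(m + j : ℝ)) * j ! = (-1) ^ m * (m + j)! := by
  have h : j ! * (m + j).descFactorial m = (m + j)! := by
    simpa using Nat.factorial_mul_descFactorial (Nat.le_add_right m j)
  rw [ascPochhammer_eval_neg_eq_descPochhammer, ← Nat.cast_add,
    descPochhammer_eval_eq_descFactorial, ← h]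
  push_cast
  ring

lemma choose_mul_ascPochhammer (b : ℝ) {n m : ℕ} (hm : m ≤ n) (j : ℕ) :
    Ring.choose b j * (-1) ^ j * (ascPochhammer ℝ n).eval (b + 1) =
      (-1) ^ (m + j) * Ring.choose (n + b) (m + j) *
        ((ascPochhammer ℝ m).eval (-(m + j : ℝ)) *
          (ascPochhammer ℝ (n - m)).eval (b + 1 - j)) := by
  obtain ⟨l, rfl⟩ := Nat.exists_eq_add_of_le hm
  have hsplit : (ascPochhammer ℝ l).eval (b + 1 - j) *
        (ascPochhammer ℝ (m + j)).eval (b + 1 - j + l) =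
      (ascPochhammer ℝ j).eval (b + 1 - j) * (ascPochhammer ℝ (m + l)).eval (b + 1) := by
    have := ascPochhammer_eval_add j (m + l) (b + 1 - j)
    rw [sub_add_cancel] at this
    rw [← ascPochhammer_eval_add, ← this]
    congr 2
    ring
  have hb := factorial_mul_choose b j
  have hnb := factorial_mul_choose ((m + l : ℕ) + b) (m + j)
  rw [show b - j + 1 = b + 1 - j by ring] at hb
  rw [show ((m + l : ℕ) : ℝ) + b - (m + j : ℕ) + 1 = b + 1 - j + l by push_cast; ring] at hnb
  rw [← hb, ← hnb] at hsplit
  have hneg := ascPochhammer_eval_neg_natCast_add m j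
  have hsign : (-1 : ℝ) ^ (m + j) * (-1) ^ m = (-1) ^ j := by
    rw [pow_add, mul_right_comm, ← mul_pow]
    simp
  have hj : (j ! : ℝ) ≠ 0 := by positivity
  rw [Nat.add_sub_cancel_left]
  apply mul_left_cancel₀ hj
  linear_combination (-1) ^ j * (-hsplit) -
    (-1) ^ (m + j) * Ring.choose (((m + l : ℕ) : ℝ) + b) (m + j) *
      (ascPochhammer ℝ l).eval (b + 1 - j) * hneg -
    Ring.choose (((m + l : ℕ) : ℝ) + b) (m + j) * (ascPochhammer ℝ l).eval (b + 1 - j) *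
      (m + j)! * hsign

lemma hasSum_one_sub_rpow (b : ℝ) {u : ℝ} (hu : |u| < 1) :
    HasSum (fun j : ℕ ↦ Ring.choose b j * (-u) ^ j) ((1 - u) ^ b) := by
  have h := (one_add_rpow_hasFPowerSeriesOnBall_zero (a := b)).hasSum (y := -u)
    (by rwa [Metric.mem_eball, edist_zero_right, enorm_neg, ← ofReal_norm,
      ENNReal.ofReal_lt_one])
  rw [zero_add, ← sub_eq_add_neg] at h
  simpa only [binomialSeries_apply, List.prod_ofFn, Finset.prod_const, Finset.card_univ,
    Fintype.card_fin, smul_eq_mul] using h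

end Polynomials

section Mellin

lemma integral_rpow_mul_one_sub_rpow {p q : ℝ} (hp : 0 < p) (hq : 0 < q) :
    ∫ u in Ioo (0 : ℝ) 1, u ^ (p - 1) * (1 - u) ^ (q - 1) = ProbabilityTheory.beta p q := by
  rw [ProbabilityTheory.beta_eq_betaIntegralReal p q hp hq, Complex.betaIntegral,
    intervalIntegral.integral_of_le zero_le_one, integral_Ioc_eq_integral_Ioo,
    ← Complex.ofReal_re (∫ u in Ioo (0 : ℝ) 1, u ^ (p - 1) * (1 - u) ^ (q - 1)),
    ← integral_complex_ofReal]
  congr 1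
  refine setIntegral_congr_fun measurableSet_Ioo fun u hu ↦ ?_
  push_cast [Complex.ofReal_cpow hu.1.le, Complex.ofReal_cpow (sub_nonneg.2 hu.2.le)]
  rfl

lemma integrableOn_rpow_mul_one_sub_rpow {p q : ℝ} (hp : 0 < p) (hq : 0 < q) :
    IntegrableOn (fun u : ℝ ↦ u ^ (p - 1) * (1 - u) ^ (q - 1)) (Ioo 0 1) :=
  Integrable.of_integral_ne_zero
    ((integral_rpow_mul_one_sub_rpow hp hq).trans_ne (ProbabilityTheory.beta_pos hp hq).ne')

/-- The polynomial numerator of the Mellin transform of `p u * (1 - u) ^ b` on `(0, 1)`, for `p` of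
degree at most `n`; see `integral_eval_mul_rpow`. -/
noncomputable def mellinNumerator (n : ℕ) (b : ℝ) (p : ℝ[X]) : ℝ[X] :=
  ∑ m ∈ Finset.range (n + 1), Polynomial.C (p.coeff m) *
    (ascPochhammer ℝ m * (ascPochhammer ℝ (n - m)).comp (Polynomial.X + Polynomial.C (b + 1 + m)))

lemma mellinNumerator_eval (n : ℕ) (b : ℝ) (p : ℝ[X]) (t : ℝ) :
    (mellinNumerator n b p).eval t = ∑ m ∈ Finset.range (n + 1), p.coeff m *
      ((ascPochhammer ℝ m).eval t * (ascPochhammer ℝ (n - m)).eval (t + (b + 1 + m))) := by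
  simp [mellinNumerator, Polynomial.eval_finsetSum]

lemma mellinNumerator_eval_zero (n : ℕ) (b : ℝ) (p : ℝ[X]) :
    (mellinNumerator n b p).eval 0 = p.eval 0 * (ascPochhammer ℝ n).eval (b + 1) := by
  rw [mellinNumerator_eval, Finset.sum_eq_single 0 (fun m _ hm ↦ by simp [hm]) (by simp)]
  simp [Polynomial.coeff_zero_eq_eval_zero]

lemma natDegree_mellinNumerator_le (n : ℕ) (b : ℝ) (p : ℝ[X]) :
    (mellinNumerator n b p).natDegree ≤ n := by
  refine Polynomial.natDegree_sum_le_of_forall_le _ _ fun m hm ↦ ?_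
  refine (Polynomial.natDegree_C_mul_le _ _).trans (Polynomial.natDegree_mul_le.trans ?_)
  rw [Polynomial.natDegree_comp, Polynomial.natDegree_X_add_C, ascPochhammer_natDegree,
    ascPochhammer_natDegree]
  have := Finset.mem_range.1 hm
  omega

lemma integral_eval_mul_rpow {n : ℕ} {b t : ℝ} (hb : -1 < b) (ht : 0 < t) {p : ℝ[X]}
    (hp : p.natDegree ≤ n) :
    ∫ u in Ioo (0 : ℝ) 1, p.eval u * (u ^ (t - 1) * (1 - u) ^ b) =
      (mellinNumerator n b p).eval t * (Gamma (b + 1) * Gamma t / Gamma (t + (b + 1) + n)) := by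
  have htm (m : ℕ) : 0 < t + m := by positivity
  have hb1 : 0 < b + 1 := by linarith
  have hexpand : EqOn (fun u : ℝ ↦ p.eval u * (u ^ (t - 1) * (1 - u) ^ b))
      (fun u ↦ ∑ m ∈ Finset.range (n + 1), p.coeff m *
        (u ^ (t + m - 1) * (1 - u) ^ (b + 1 - 1))) (Ioo 0 1) := fun u hu ↦ by
    simp only [Polynomial.eval_eq_sum_range' (Nat.lt_succ_of_le hp), Finset.sum_mul]
    refine Finset.sum_congr rfl fun m _ ↦ ?_
    rw [add_sub_right_comm, rpow_add hu.1, rpow_natCast, add_sub_cancel_right]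
    ring
  rw [setIntegral_congr_fun measurableSet_Ioo hexpand, integral_finsetSum _ fun m _ ↦
    (integrableOn_rpow_mul_one_sub_rpow (htm m) hb1).const_mul _, mellinNumerator_eval,
    Finset.sum_mul]
  refine Finset.sum_congr rfl fun m hm ↦ ?_
  have hmn : m ≤ n := Finset.mem_range_succ_iff.1 hm
  have hpos : 0 < t + (b + 1 + m) := by linarith [htm m]
  have hpos' : 0 < t + (b + 1) + n := by positivity
  have hΓ := Gamma_add_natCast_eq (n - m) hpos
  rw [Nat.cast_sub hmn, show t + (b + 1 + m) + ((n : ℝ) - m) = t + (b + 1) + n by ring] at hΓ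
  rw [integral_const_mul, integral_rpow_mul_one_sub_rpow (htm m) hb1, ProbabilityTheory.beta,
    Gamma_add_natCast_eq m ht, show t + m + (b + 1) = t + (b + 1 + m) by ring]
  have := (Gamma_pos_of_pos hpos).ne'
  have := (Gamma_pos_of_pos hpos').ne'
  field_simp
  rw [hΓ]
  ring

/-- Up to the substitution `x = 1 - 2 * u`, the polynomial `P n` of the theorem: it has degree at
most `n`, is orthogonal on `(0, 1)`, for the weight `u ^ a * (1 - u) ^ b`, to `u ^ (α * j)` for
`j < n`, and is normalised at `u = 0`. -/
structure IsJacobiBiorthogonal (α a b : ℝ) (n : ℕ) (p : ℝ[X]) : Prop where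
  natDegree_le : p.natDegree ≤ n
  integral_eq_zero : ∀ j < n, ∫ u in Ioo (0 : ℝ) 1, p.eval u * (u ^ (a + α * j) * (1 - u) ^ b) = 0
  eval_zero : p.eval 0 = Ring.multichoose ((a + 1) / α) n

variable {α a b : ℝ} {n : ℕ} {p : ℝ[X]}

lemma eval_nodal_neg (hα : α ≠ 0) (s t : ℝ) :
    (Lagrange.nodal (Finset.range n) fun j ↦ s + α * j).eval (-t) =
      (-α) ^ n * (ascPochhammer ℝ n).eval ((s + t) / α) := by
  have hpow : (-α) ^ n = ∏ _j ∈ Finset.range n, (-α) := by simp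
  rw [Lagrange.eval_nodal, ascPochhammer_eval_eq_prod, hpow, ← Finset.prod_mul_distrib]
  refine Finset.prod_congr rfl fun j _ ↦ ?_
  field_simp
  ring

lemma exists_eq_C_mul_nodal {v : ℕ → ℝ} (hv : Function.Injective v) {q : ℝ[X]}
    (hq : q.natDegree ≤ n) (hroot : ∀ j < n, q.eval (v j) = 0) :
    ∃ c, q = Polynomial.C c * Lagrange.nodal (Finset.range n) v := by
  refine ⟨q.coeff n, sub_eq_zero.1 ?_⟩
  refine Polynomial.eq_zero_of_degree_lt_of_eval_index_eq_zero (Finset.range n) hv.injOn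
    ?_ fun j hj ↦ ?_
  · rw [Finset.card_range, Polynomial.degree_lt_iff_coeff_zero]
    have hdeg : (Lagrange.nodal (Finset.range n) v).natDegree = n := by
      rw [Lagrange.natDegree_nodal, Finset.card_range]
    intro k hk
    rcases hk.eq_or_lt with rfl | hk
    · have := (Lagrange.nodal_monic (s := Finset.range n) (v := v)).coeff_natDegree
      rw [hdeg] at this
      simp [this]
    · simp [Polynomial.coeff_eq_zero_of_natDegree_lt (hq.trans_lt hk),
        Polynomial.coeff_eq_zero_of_natDegree_lt (hdeg.trans_lt hk)]
  · simp [hroot j (Finset.mem_range.1 hj), Lagrange.eval_nodal_at_node hj]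

lemma IsJacobiBiorthogonal.mellinNumerator_eval_neg (hp : IsJacobiBiorthogonal α a b n p)
    (hα : 0 < α) (ha : -1 < a) (hb : -1 < b) (t : ℝ) :
    (mellinNumerator n b p).eval (-t) =
      (ascPochhammer ℝ n).eval (b + 1) * Ring.multichoose ((a + 1 + t) / α) n := by
  have hroot (j) (hj : j < n) : (mellinNumerator n b p).eval (a + 1 + α * j) = 0 := by
    have hpos : 0 < a + 1 + α * j := by
      have : 0 ≤ α * j := by positivity
      linarith
    have hint := integral_eval_mul_rpow hb hpos hp.natDegree_le
    rw [show a + 1 + α * j - 1 = a + α * j by ring, hp.integral_eq_zero j hj, eq_comm] at hint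
    have hb1 : 0 < b + 1 := by linarith
    have := Gamma_pos_of_pos hb1
    have := Gamma_pos_of_pos hpos
    have : 0 < Gamma (a + 1 + α * j + (b + 1) + n) := Gamma_pos_of_pos (by positivity)
    exact (mul_eq_zero.1 hint).resolve_right (by positivity)
  have hinj : Function.Injective fun j : ℕ ↦ a + 1 + α * j := fun i j h ↦ by
    simpa [hα.ne'] using h
  obtain ⟨c, hc⟩ := exists_eq_C_mul_nodal hinj (natDegree_mellinNumerator_le n b p) hroot
  have heval (s : ℝ) : (mellinNumerator n b p).eval (-s) =
      c * ((-α) ^ n * (n ! * Ring.multichoose ((a + 1 + s) / α) n)) := by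
    rw [factorial_mul_multichoose, ← eval_nodal_neg hα.ne', hc,
      Polynomial.eval_C_mul]
  have h0 := mellinNumerator_eval_zero n b p
  rw [hp.eval_zero, ← neg_zero, heval 0, add_zero] at h0
  have := (multichoose_pos (div_pos (by linarith : 0 < a + 1) hα) n).ne'
  rw [heval t]
  apply mul_right_cancel₀ this
  linear_combination Ring.multichoose ((a + 1 + t) / α) n * h0

lemma IsJacobiBiorthogonal.hasSum_eval_mul_rpow (hp : IsJacobiBiorthogonal α a b n p)
    (hα : 0 < α) (ha : -1 < a) (hb : -1 < b) {u : ℝ} (hu : |u| < 1) :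
    HasSum (fun k : ℕ ↦ Ring.choose (n + b) k * (-u) ^ k * Ring.multichoose ((a + 1 + k) / α) n)
      (p.eval u * (1 - u) ^ b) := by
  have hmonomial (m : ℕ) : HasSum (fun k : ℕ ↦ if m ≤ k then
      p.coeff m * u ^ m * (Ring.choose b (k - m) * (-u) ^ (k - m)) else 0)
      (p.coeff m * u ^ m * (1 - u) ^ b) := by
    have h := (hasSum_one_sub_rpow b hu).mul_left (p.coeff m * u ^ m)
    rw [← (add_right_injective m).hasSum_iff]
    · simpa [Function.comp_def] using h
    · exact fun k hk ↦ if_neg fun hmk ↦ hk ⟨k - m, by simp; omega⟩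
  have hsum := hasSum_sum (s := Finset.range (n + 1)) fun m _ ↦ hmonomial m
  rw [← Finset.sum_mul, ← Polynomial.eval_eq_sum_range' (Nat.lt_succ_of_le hp.natDegree_le)] at hsum
  convert hsum using 2 with k
  have hpos : 0 < (ascPochhammer ℝ n).eval (b + 1) := ascPochhammer_pos n _ (by linarith)
  apply mul_right_cancel₀ hpos.ne'
  rw [mul_assoc, mul_comm (Ring.multichoose _ _), ← hp.mellinNumerator_eval_neg hα ha hb,
    mellinNumerator_eval, Finset.mul_sum, Finset.sum_mul]
  refine Finset.sum_congr rfl fun m hm ↦ ?_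
  split_ifs with hmk
  · obtain ⟨j, rfl⟩ := Nat.exists_eq_add_of_le hmk
    have h := choose_mul_ascPochhammer b (Finset.mem_range_succ_iff.1 hm) j
    rw [Nat.cast_add, show -(m + j : ℝ) + (b + 1 + m) = b + 1 - j by ring,
      Nat.add_sub_cancel_left, neg_pow u (m + j), neg_pow u j, pow_add u]
    linear_combination -p.coeff m * u ^ m * u ^ j * h
  · rw [ascPochhammer_eval_neg_coe_nat_of_lt (not_le.1 hmk)]
    ring

lemma integral_Ioo_comp_one_sub_two_mul (f : ℝ → ℝ) :
    ∫ x in Ioo (-1 : ℝ) 1, f x = 2 * ∫ u in Ioo (0 : ℝ) 1, f (1 - 2 * u) := by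
  have h := intervalIntegral.integral_comp_sub_mul (a := 0) (b := 1) f (two_ne_zero (α := ℝ)) 1
  norm_num [intervalIntegral.integral_of_le, integral_Ioc_eq_integral_Ioo] at h
  linarith

lemma isJacobiBiorthogonal_comp {P : ℝ[X]} (hα : 0 < α) (ha : -1 < a) (hdeg : P.natDegree = n)
    (horth : ∀ j < n, ∫ x in Ioo (-1 : ℝ) 1,
      P.eval x * (1 - x) ^ (α * (j : ℝ)) * (1 - x) ^ a * (1 + x) ^ b = 0)
    (hnorm : P.eval 1 = Gamma (n + (a + 1) / α) / (Gamma (n + 1) * Gamma ((a + 1) / α))) :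
    IsJacobiBiorthogonal α a b n (P.comp (1 - 2 * Polynomial.X)) where
  natDegree_le := by
    have : (1 - 2 * Polynomial.X : ℝ[X]).natDegree ≤ 1 := by compute_degree
    rw [Polynomial.natDegree_comp, hdeg]
    exact (Nat.mul_le_mul_left n this).trans_eq (mul_one n)
  integral_eq_zero j hj := by
    have hsubst : EqOn (fun u : ℝ ↦ P.eval (1 - 2 * u) * (1 - (1 - 2 * u)) ^ (α * (j : ℝ)) *
          (1 - (1 - 2 * u)) ^ a * (1 + (1 - 2 * u)) ^ b)
        (fun u ↦ 2 ^ (α * j) * 2 ^ a * 2 ^ b * ((P.comp (1 - 2 * Polynomial.X)).eval u *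
          (u ^ (a + α * j) * (1 - u) ^ b))) (Ioo 0 1) := fun u hu ↦ by
      have hu1 : 0 ≤ 1 - u := sub_nonneg.2 hu.2.le
      simp only [show 1 - (1 - 2 * u) = 2 * u by ring, show 1 + (1 - 2 * u) = 2 * (1 - u) by ring,
        mul_rpow zero_le_two hu.1.le, mul_rpow zero_le_two hu1, rpow_add hu.1, Polynomial.eval_comp,
        Polynomial.eval_sub, Polynomial.eval_mul, Polynomial.eval_one, Polynomial.eval_ofNat,
        Polynomial.eval_X]
      ring
    have h := horth j hj
    rw [integral_Ioo_comp_one_sub_two_mul, setIntegral_congr_fun measurableSet_Ioo hsubst,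
      integral_const_mul, ← mul_assoc] at h
    exact (mul_eq_zero.1 h).resolve_left (by positivity)
  eval_zero := by
    have hκ : 0 < (a + 1) / α := div_pos (by linarith) hα
    simp [hnorm, Gamma_div_eq_multichoose n hκ]

end Mellin

section Monotonicity

lemma monotoneOn_of_hasDerivAt_nonneg {D : Set ℝ} (hD : Convex ℝ D) {f f' : ℝ → ℝ}
    (hf : ∀ x ∈ D, HasDerivAt f (f' x) x) (hf' : ∀ x ∈ interior D, 0 ≤ f' x) : MonotoneOn f D :=
  monotoneOn_of_hasDerivWithinAt_nonneg hD (fun x hx ↦ (hf x hx).continuousAt.continuousWithinAt)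
    (fun x hx ↦ (hf x (interior_subset hx)).hasDerivWithinAt) hf'

lemma antitoneOn_of_hasDerivAt_nonpos {D : Set ℝ} (hD : Convex ℝ D) {f f' : ℝ → ℝ}
    (hf : ∀ x ∈ D, HasDerivAt f (f' x) x) (hf' : ∀ x ∈ interior D, f' x ≤ 0) : AntitoneOn f D :=
  antitoneOn_of_hasDerivWithinAt_nonpos hD (fun x hx ↦ (hf x hx).continuousAt.continuousWithinAt)
    (fun x hx ↦ (hf x (interior_subset hx)).hasDerivWithinAt) hf'

end Monotonicity

section Curve

lemma cos_pos_of_mem_Ico {s : ℝ} (hs : s ∈ Ico 0 (π / 2)) : 0 < cos s :=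
  cos_pos_of_mem_Ioo ⟨by linarith [hs.1, pi_pos], hs.2⟩

lemma hasDerivAt_cos_rpow {s : ℝ} (hs : 0 < cos s) (k : ℝ) :
    HasDerivAt (fun x ↦ cos x ^ k) (-(k * cos s ^ k * tan s)) s := by
  refine ((hasDerivAt_cos s).rpow_const (Or.inl hs.ne')).congr_deriv ?_
  rw [rpow_sub_one hs.ne', tan_eq_sin_div_cos]
  ring

/-- The squared norm of `1 - B * V ^ (-k)` at a point `V` of argument `s` on the vertical line
`Re V = c`, where `A = B * c ^ (-k)`; see `norm_one_sub_mul_cpow_sq`. -/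
noncomputable def curveNormSq (k A s : ℝ) : ℝ :=
  1 + (A * cos s ^ k) ^ 2 - 2 * (A * cos s ^ k) * cos (k * s)

lemma curveNormSq_abs (k A s : ℝ) : curveNormSq k A |s| = curveNormSq k A s := by
  have : cos (k * |s|) = cos (k * s) := by
    rw [← cos_abs, abs_mul, abs_abs, ← abs_mul, cos_abs]
  rw [curveNormSq, this, cos_abs, curveNormSq]

lemma hasDerivAt_curveNormSq {s : ℝ} (hs : 0 < cos s) (k A : ℝ) :
    HasDerivAt (curveNormSq k A) (2 * k * (A * cos s ^ k) / cos s *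
      (sin ((1 + k) * s) - A * cos s ^ k * sin s)) s := by
  have hw := (hasDerivAt_cos_rpow hs k).const_mul A
  have hcos : HasDerivAt (fun x ↦ cos (k * x)) (-sin (k * s) * k) s := by
    simpa using ((hasDerivAt_id s).const_mul k).cos
  refine (((hw.pow 2).const_add 1).sub ((hw.const_mul 2).mul hcos)).congr_deriv ?_
  rw [show (1 + k) * s = s + k * s by ring, sin_add, tan_eq_sin_div_cos]
  field_simp
  simp
  ring

lemma curveNormSq_le {k A s : ℝ} (hw : 0 ≤ A * cos s ^ k) :
    curveNormSq k A s ≤ (1 + A * cos s ^ k) ^ 2 := by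
  unfold curveNormSq
  nlinarith [neg_one_le_cos (k * s)]

lemma one_sub_sq_le_curveNormSq {g Q s : ℝ} (hg1 : 1 ≤ g) (hg2 : g ≤ 2) (hQ : 0 ≤ Q)
    (hs : |s| < π / 2) : (1 - Q) ^ 2 ≤ curveNormSq (-g) Q s := by
  have hmono : MonotoneOn (curveNormSq (-g) Q) (Ico 0 (π / 2)) := by
    refine monotoneOn_of_hasDerivAt_nonneg (convex_Ico _ _)
      (fun x hx ↦ hasDerivAt_curveNormSq (cos_pos_of_mem_Ico hx) _ _) fun x hx ↦ ?_
    have hx := interior_subset hx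
    have hc := cos_pos_of_mem_Ico hx
    have hsin : 0 ≤ sin x := sin_nonneg_of_nonneg_of_le_pi hx.1 (by linarith [hx.2, pi_pos])
    have hsin' : 0 ≤ sin ((g - 1) * x) := sin_nonneg_of_nonneg_of_le_pi
      (mul_nonneg (by linarith) hx.1) (by nlinarith [hx.1, hx.2, pi_pos])
    rw [show (1 + -g) * x = -((g - 1) * x) by ring, sin_neg]
    have : 0 ≤ 2 * g * (Q * cos x ^ (-g)) / cos x *
        (sin ((g - 1) * x) + Q * cos x ^ (-g) * sin x) := by positivity
    linear_combination this
  have h := hmono (left_mem_Ico.2 (by positivity)) ⟨abs_nonneg s, hs⟩ (abs_nonneg s)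
  rw [curveNormSq_abs] at h
  refine le_trans (le_of_eq ?_) h
  simp [curveNormSq]
  ring

lemma norm_one_sub_mul_cpow_sq {V : ℂ} (hV : 0 < V.re) (k B : ℝ) :
    ‖1 - B * V ^ ((-k : ℝ) : ℂ)‖ ^ 2 = curveNormSq k (B * V.re ^ (-k)) V.arg := by
  have hcos : 0 < cos V.arg := cos_pos_of_mem_Ioo
    (abs_lt.1 (Complex.abs_arg_lt_pi_div_two_iff.2 (Or.inl hV)))
  have hnorm : 0 < ‖V‖ := hV.trans_le (Complex.re_le_norm V)
  have hw : B * V.re ^ (-k) * cos V.arg ^ k = B * ‖V‖ ^ (-k) := by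
    rw [← Complex.norm_mul_cos_arg V, mul_rpow hnorm.le hcos.le, rpow_neg hcos.le]
    field_simp
  rw [curveNormSq, hw, Complex.sq_norm, Complex.normSq_apply, Complex.sub_re, Complex.sub_im,
    Complex.re_ofReal_mul, Complex.im_ofReal_mul, Complex.cpow_ofReal_re, Complex.cpow_ofReal_im,
    Complex.one_re, Complex.one_im, mul_neg, cos_neg, sin_neg, mul_comm V.arg]
  linear_combination (B * ‖V‖ ^ (-k)) ^ 2 * sin_sq_add_cos_sq (k * V.arg)

lemma norm_one_sub_cpow_sq {V : ℂ} (hV : 0 < V.re) (g : ℝ) :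
    ‖1 - V ^ (g : ℂ)‖ ^ 2 = curveNormSq (-g) (V.re ^ g) V.arg := by
  simpa using norm_one_sub_mul_cpow_sq hV (-g) 1

variable {g : ℝ} {V : ℂ}

lemma one_sub_rpow_re_le_norm_one_sub_cpow (hg1 : 1 ≤ g) (hg2 : g ≤ 2) (hV : 0 < V.re) :
    1 - V.re ^ g ≤ ‖1 - V ^ (g : ℂ)‖ := by
  refine (le_abs_self _).trans (abs_le_of_sq_le_sq ?_ (norm_nonneg _))
  rw [norm_one_sub_cpow_sq hV]
  exact one_sub_sq_le_curveNormSq hg1 hg2 (by positivity)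
    (Complex.abs_arg_lt_pi_div_two_iff.2 (Or.inl hV))

lemma half_one_sub_rpow_re_mul_le_norm_one_sub_cpow (hg1 : 1 ≤ g) (hg2 : g ≤ 2) (hV : 0 < V.re)
    (hV1 : V.re < 1) : (1 - V.re ^ g) / 2 * ‖V‖ ^ g ≤ ‖1 - V ^ (g : ℂ)‖ := by
  have hre := one_sub_rpow_re_le_norm_one_sub_cpow hg1 hg2 hV
  have hVg : V.re ^ g < 1 := rpow_lt_one hV.le hV1 (by linarith)
  have hVg0 : 0 ≤ V.re ^ g := by positivity
  have htri : ‖V‖ ^ g - 1 ≤ ‖1 - V ^ (g : ℂ)‖ := by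
    simpa [Complex.norm_cpow_real, norm_sub_rev] using norm_sub_norm_le (V ^ (g : ℂ)) 1
  rcases le_or_gt (‖V‖ ^ g) 2 with _ | _ <;> nlinarith

end Curve

section VerticalLine

/-- The parametrisation `τ ↦ c + τ i` of the vertical line `Re V = c`. -/
noncomputable def verticalLine (c τ : ℝ) : ℂ := c + τ * Complex.I

@[simp]
lemma re_verticalLine (c τ : ℝ) : (verticalLine c τ).re = c := by
  simp [verticalLine]

@[simp]
lemma im_verticalLine (c τ : ℝ) : (verticalLine c τ).im = τ := by
  simp [verticalLine]

lemma norm_verticalLine_sq (c τ : ℝ) : ‖verticalLine c τ‖ ^ 2 = c ^ 2 + τ ^ 2 := by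
  rw [Complex.sq_norm, verticalLine, Complex.normSq_add_mul_I]

lemma le_norm_verticalLine (c τ : ℝ) : c ≤ ‖verticalLine c τ‖ := by
  simpa using Complex.re_le_norm (verticalLine c τ)

lemma abs_le_norm_verticalLine (c τ : ℝ) : |τ| ≤ ‖verticalLine c τ‖ := by
  simpa using Complex.abs_im_le_norm (verticalLine c τ)

lemma hasDerivAt_verticalLine (c τ : ℝ) : HasDerivAt (verticalLine c) Complex.I τ :=
  (((hasDerivAt_id τ).ofReal_comp.mul_const Complex.I).const_add (c : ℂ)).congr_deriv (by simp)

lemma continuous_verticalLine (c : ℝ) : Continuous (verticalLine c) := by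
  unfold verticalLine
  fun_prop

lemma differentiableAt_cpow_const {V : ℂ} (hV : 0 < V.re) (q : ℝ) :
    DifferentiableAt ℂ (fun W : ℂ ↦ W ^ (q : ℂ)) V :=
  ((hasDerivAt_id V).cpow_const (Or.inl hV)).differentiableAt

variable {c : ℝ}

lemma integrable_norm_verticalLine_rpow {r : ℝ} (hc : 0 < c) (hr : r < -1) :
    Integrable (fun τ ↦ ‖verticalLine c τ‖ ^ r) := by
  have hm : 0 < min c 1 / 2 := by positivity
  refine ((integrable_one_add_norm (E := ℝ) (μ := volume) (r := -r) (by simp; linarith)).const_mul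
    ((min c 1 / 2) ^ r)).mono' ?_ (Eventually.of_forall fun τ ↦ ?_)
  · exact ((continuous_verticalLine c).norm.rpow_const fun τ ↦
      Or.inl (hc.trans_le (le_norm_verticalLine c τ)).ne').aestronglyMeasurable
  · rw [norm_of_nonneg (by positivity), neg_neg, ← mul_rpow hm.le (by positivity)]
    refine rpow_le_rpow_of_nonpos (by positivity) ?_ (by linarith)
    nlinarith [le_norm_verticalLine c τ, abs_le_norm_verticalLine c τ, min_le_left c 1,
      min_le_right c 1, norm_eq_abs τ, abs_nonneg τ]

lemma integrable_div_sq_add_sq (hc : 0 < c) : Integrable (fun τ ↦ c / (c ^ 2 + τ ^ 2)) := by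
  lift c to NNReal using hc.le
  refine ((ProbabilityTheory.integrable_cauchyPDFReal 0 (γ := c)).const_mul π).congr
    (Eventually.of_forall fun τ ↦ ?_)
  simp only [ProbabilityTheory.cauchyPDFReal_def, sub_zero]
  field_simp
  ring

lemma integral_univ_div_sq_add_sq (hc : 0 < c) : ∫ τ, c / (c ^ 2 + τ ^ 2) = π := by
  lift c to NNReal using hc.le
  rw [← mul_one π, ← ProbabilityTheory.integral_cauchyPDFReal_eq_one 0 (γ := c)
    (by exact_mod_cast hc.ne'), ← integral_const_mul]
  congr with τ
  rw [ProbabilityTheory.cauchyPDFReal_def]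
  field_simp
  ring

end VerticalLine

section Cauchy

variable {F : ℂ → ℂ} {c C δ : ℝ}

lemma norm_intervalIntegral_verticalLine_le {T M : ℝ} (hc : 0 ≤ c) (hcT : c ≤ T)
    (hF : DifferentiableOn ℂ F {V | c ≤ V.re})
    (hM : ∀ V : ℂ, c ≤ V.re → T ≤ ‖V‖ → ‖F V‖ ≤ M) :
    ‖∫ τ in -T..T, F (verticalLine c τ)‖ ≤ 4 * M * T := by
  have hT : 0 ≤ T := hc.trans hcT
  have hM0 : 0 ≤ M := (norm_nonneg _).trans
    (hM T (by simpa using hcT) (by simpa using le_abs_self T))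
  have hrect := Complex.integral_boundary_rect_eq_zero_of_differentiableOn F ⟨c, -T⟩ ⟨T, T⟩
    (hF.mono fun V hV ↦ by
      have hre : V.re ∈ uIcc c T := hV.1
      rw [uIcc_of_le hcT] at hre
      exact hre.1)
  have horizontal (y : ℝ) (hy : |y| = T) : ‖∫ x : ℝ in c..T, F (x + y * Complex.I)‖ ≤ M * T := by
    refine (intervalIntegral.norm_integral_le_of_norm_le_const fun x hx ↦ ?_).trans
      (mul_le_mul_of_nonneg_left (by rw [abs_of_nonneg] <;> linarith : |T - c| ≤ T) hM0)
    rw [uIoc_of_le hcT] at hx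
    exact hM _ (by simpa using hx.1.le) (hy.symm.trans_le (by
      simpa using Complex.abs_im_le_norm ((x : ℂ) + y * Complex.I)))
  have vertical : ‖∫ y : ℝ in -T..T, F (T + y * Complex.I)‖ ≤ M * (2 * T) := by
    refine (intervalIntegral.norm_integral_le_of_norm_le_const fun y _ ↦ ?_).trans_eq
      (by rw [abs_of_nonneg] <;> linarith)
    exact hM _ (by simpa using hcT) (le_norm_verticalLine T y)
  have hbot := horizontal (-T) (by rw [abs_neg, abs_of_nonneg hT])
  have htop := horizontal T (abs_of_nonneg hT)
  set A := ∫ x : ℝ in c..T, F (x + (-T : ℝ) * Complex.I)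
  set B := ∫ x : ℝ in c..T, F (x + T * Complex.I)
  set D := ∫ y : ℝ in -T..T, F (T + y * Complex.I)
  have hline : ∫ τ in -T..T, F (verticalLine c τ) = -Complex.I * A + Complex.I * B + D := by
    simp only [smul_eq_mul] at hrect
    unfold verticalLine
    linear_combination Complex.I * hrect +
      ((∫ τ in -T..T, F (c + τ * Complex.I)) - D) * Complex.I_sq
  calc ‖∫ τ in -T..T, F (verticalLine c τ)‖ ≤ ‖A‖ + ‖B‖ + ‖D‖ := by
        rw [hline]
        exact norm_add₃_le.trans (by simp)
    _ ≤ 4 * M * T := by linarith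

variable (hc : 0 < c) (hδ : 0 < δ) (hF : DifferentiableOn ℂ F {V | 0 < V.re})
  (hbound : ∀ V : ℂ, 0 < V.re → 2 ≤ ‖V‖ → ‖F V‖ ≤ C * ‖V‖ ^ (-(1 + δ)))

include hc hF in
lemma continuous_comp_verticalLine : Continuous fun τ ↦ F (verticalLine c τ) :=
  hF.continuousOn.comp_continuous (continuous_verticalLine c) fun τ ↦ by simpa using hc

include hc hδ hF hbound

lemma integrable_comp_verticalLine : Integrable fun τ ↦ F (verticalLine c τ) := by
  refine (continuous_comp_verticalLine hc hF).locallyIntegrable.integrable_of_isBigO_cocompact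
    (Asymptotics.IsBigO.of_bound C ?_)
    ((integrable_norm_verticalLine_rpow hc (by linarith : -(1 + δ) < -1)).integrableAtFilter _)
  filter_upwards [tendsto_norm_cocompact_atTop.eventually_ge_atTop 2] with τ hτ
  rw [norm_of_nonneg (by positivity)]
  exact hbound _ (by simpa using hc) (hτ.trans (abs_le_norm_verticalLine c τ))

lemma integral_verticalLine_eq_zero : ∫ τ, F (verticalLine c τ) = 0 := by
  have hlim := intervalIntegral_tendsto_integral
    (integrable_comp_verticalLine hc hδ hF hbound) tendsto_neg_atTop_atBot tendsto_id
  refine tendsto_nhds_unique hlim (squeeze_zero_norm' ?_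
    (by simpa using (tendsto_rpow_neg_atTop hδ).const_mul (4 * C)))
  have hC : 0 ≤ C := nonneg_of_mul_nonneg_left
    ((norm_nonneg _).trans (hbound 2 (by simp) (by simp))) (by simp [rpow_pos_of_pos])
  filter_upwards [eventually_ge_atTop 2, eventually_ge_atTop c] with T hT2 hTc
  have hT : 0 < T := by linarith
  refine (norm_intervalIntegral_verticalLine_le hc.le hTc
    (hF.mono fun V hV ↦ hc.trans_le hV) (M := C * T ^ (-(1 + δ))) fun V hV hTV ↦ ?_).trans_eq ?_
  · refine (hbound V (hc.trans_le hV) (hT2.trans hTV)).trans ?_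
    exact mul_le_mul_of_nonneg_left (rpow_le_rpow_of_nonpos hT hTV (by linarith)) hC
  · rw [show -δ = -(1 + δ) + 1 by ring, rpow_add_one hT.ne']
    ring

end Cauchy

section HalfPlane

variable {c : ℝ}

lemma verticalLine_ne_one (hc1 : c < 1) (τ : ℝ) : verticalLine c τ ≠ 1 := fun h ↦
  hc1.ne (by simpa using congrArg Complex.re h)

lemma integral_inv_mul_one_sub_inv_re (hc : 0 < c) (hc1 : c < 1)
    (hint : Integrable fun τ ↦ (verticalLine c τ)⁻¹ * (1 - verticalLine c τ)⁻¹) :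
    (∫ τ, (verticalLine c τ)⁻¹ * (1 - verticalLine c τ)⁻¹).re = 2 * π := by
  have hre (τ : ℝ) : ((verticalLine c τ)⁻¹ * (1 - verticalLine c τ)⁻¹).re =
      c / (c ^ 2 + τ ^ 2) + (1 - c) / ((1 - c) ^ 2 + τ ^ 2) := by
    have hne : verticalLine c τ ≠ 0 := fun h ↦ hc.ne' (by simpa using congrArg Complex.re h)
    have hne' : 1 - verticalLine c τ ≠ 0 := sub_ne_zero.2 (verticalLine_ne_one hc1 τ).symm
    have hsplit : (verticalLine c τ)⁻¹ * (1 - verticalLine c τ)⁻¹ =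
        (verticalLine c τ)⁻¹ + (1 - verticalLine c τ)⁻¹ := by
      field_simp
      ring
    rw [hsplit, Complex.add_re, Complex.inv_re, Complex.inv_re, Complex.normSq_apply,
      Complex.normSq_apply]
    simp [sq]
  have h := integral_re hint
  simp only [RCLike.re_to_complex, hre] at h
  rw [← h, integral_add (integrable_div_sq_add_sq hc) (integrable_div_sq_add_sq (by linarith)),
    integral_univ_div_sq_add_sq hc, integral_univ_div_sq_add_sq (by linarith)]
  ring

lemma half_norm_le_norm_one_sub {V : ℂ} (hV : 2 ≤ ‖V‖) : ‖V‖ / 2 ≤ ‖1 - V‖ := by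
  have := norm_sub_norm_le V 1
  rw [norm_sub_rev, norm_one] at this
  linarith

lemma norm_dslope_sub_inv_le {f : ℂ → ℂ} {C δ : ℝ} {V : ℂ} (hV : 2 ≤ ‖V‖)
    (hf : ‖f V‖ ≤ C * ‖V‖ ^ (-δ)) :
    ‖dslope (fun W ↦ f W - f 1 * W⁻¹) 1 V‖ ≤ 2 * (C + ‖f 1‖) * ‖V‖ ^ (-(1 + min δ 1)) := by
  have hn : 0 < ‖V‖ := by linarith
  have hV1 : V ≠ 1 := by
    rintro rfl
    norm_num at hV
  have hC : 0 ≤ C := nonneg_of_mul_nonneg_left ((norm_nonneg _).trans hf) (by positivity)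
  have hδ : ‖V‖ ^ (-δ) ≤ ‖V‖ ^ (-min δ 1) :=
    rpow_le_rpow_of_exponent_le (by linarith) (neg_le_neg (min_le_left δ 1))
  have hone : ‖V‖⁻¹ ≤ ‖V‖ ^ (-min δ 1) := by
    rw [← rpow_neg_one]
    exact rpow_le_rpow_of_exponent_le (by linarith) (neg_le_neg (min_le_right δ 1))
  rw [dslope_of_ne _ hV1, slope_def_field, inv_one, mul_one, sub_self, sub_zero, norm_div]
  calc ‖f V - f 1 * V⁻¹‖ / ‖V - 1‖
      ≤ (C * ‖V‖ ^ (-δ) + ‖f 1‖ * ‖V‖⁻¹) / (‖V‖ / 2) := by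
        rw [norm_sub_rev V]
        gcongr
        · refine (norm_sub_le _ _).trans ?_
          rw [norm_mul, norm_inv]
          gcongr
        · exact half_norm_le_norm_one_sub hV
    _ ≤ (C * ‖V‖ ^ (-min δ 1) + ‖f 1‖ * ‖V‖ ^ (-min δ 1)) / (‖V‖ / 2) := by gcongr
    _ = 2 * (C + ‖f 1‖) * ‖V‖ ^ (-(1 + min δ 1)) := by
        rw [neg_add, rpow_add hn, rpow_neg_one]
        field_simp

lemma re_integral_mul_one_sub_inv {f : ℂ → ℂ} {C δ : ℝ} (hc : 0 < c) (hc1 : c < 1) (hδ : 0 < δ)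
    (hint : Integrable fun τ ↦ (verticalLine c τ)⁻¹ * (1 - verticalLine c τ)⁻¹)
    (hf : DifferentiableOn ℂ f {V | 0 < V.re}) (hf1 : f 1 = 1)
    (hbound : ∀ V : ℂ, 0 < V.re → 2 ≤ ‖V‖ → ‖f V‖ ≤ C * ‖V‖ ^ (-δ)) :
    (∫ τ, f (verticalLine c τ) * (1 - verticalLine c τ)⁻¹).re = 2 * π := by
  have hhalf : {V : ℂ | 0 < V.re} ∈ nhds 1 :=
    (isOpen_lt continuous_const Complex.continuous_re).mem_nhds (by simp)
  have hG : DifferentiableOn ℂ (dslope (fun W ↦ f W - f 1 * W⁻¹) 1) {V | 0 < V.re} :=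
    (Complex.differentiableOn_dslope hhalf).2 (hf.sub ((differentiableOn_id.inv fun _ hV ↦
      Complex.slitPlane_ne_zero (Or.inl hV)).const_mul _))
  have hGbound (V : ℂ) (_ : 0 < V.re) (hV : 2 ≤ ‖V‖) :=
    norm_dslope_sub_inv_le hV (hbound V ‹_› hV)
  have hδ' : 0 < min δ 1 := lt_min hδ one_pos
  have hGint := integrable_comp_verticalLine hc hδ' hG hGbound
  have hfG (τ : ℝ) : f (verticalLine c τ) * (1 - verticalLine c τ)⁻¹ =
      (verticalLine c τ)⁻¹ * (1 - verticalLine c τ)⁻¹ -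
        dslope (fun W ↦ f W - f 1 * W⁻¹) 1 (verticalLine c τ) := by
    rw [dslope_of_ne _ (verticalLine_ne_one hc1 τ), slope_def_field, hf1, inv_one, mul_one,
      sub_self, sub_zero, one_mul, ← neg_sub 1 (verticalLine c τ), div_neg, div_eq_mul_inv]
    ring
  simp_rw [hfG]
  rw [integral_sub hint hGint, integral_verticalLine_eq_zero hc hδ' hG hGbound, sub_zero,
    integral_inv_mul_one_sub_inv_re hc hc1 hint]

end HalfPlane

section Kernel

/-- The function `V ^ q / (1 - V ^ g) ^ n`; with `q = g - 1 - g * κ` its integrals over vertical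
lines are multiples of the coefficients `Ring.multichoose κ (n - 1)` of `(1 - z) ^ (-κ)`. -/
noncomputable def cpowKernel (g q : ℝ) (n : ℕ) (V : ℂ) : ℂ :=
  V ^ (q : ℂ) * ((1 - V ^ (g : ℂ)) ^ n)⁻¹

variable {g q c κ : ℝ} {n : ℕ} {V : ℂ}

lemma eq_one_of_cpow_eq_one (hg : 0 < g) (hg2 : g ≤ 2) (hV : 0 < V.re) (h : V ^ (g : ℂ) = 1) :
    V = 1 := by
  have harg := abs_lt.1 (Complex.abs_arg_lt_pi_div_two_iff.2 (Or.inl hV))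
  have him : (Complex.log V * g).im = V.arg * g := by simp [Complex.log_im]
  have := Complex.cpow_mul (x := V) (y := g) (g : ℂ)⁻¹ (by rw [him]; nlinarith [pi_pos])
    (by rw [him]; nlinarith [pi_pos])
  rwa [mul_inv_cancel₀ (by exact_mod_cast hg.ne'), Complex.cpow_one, h, Complex.one_cpow] at this

lemma one_sub_cpow_ne_zero (hg : 0 < g) (hg2 : g ≤ 2) (hV : 0 < V.re) (hV1 : V ≠ 1) :
    1 - V ^ (g : ℂ) ≠ 0 := fun h ↦
  hV1 (eq_one_of_cpow_eq_one hg hg2 hV (sub_eq_zero.1 h).symm)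

lemma norm_cpowKernel_le (hg1 : 1 ≤ g) (hg2 : g ≤ 2) (hV : 0 < V.re) (hV1 : V.re < 1) :
    ‖cpowKernel g q n V‖ ≤ (((1 - V.re ^ g) / 2) ^ n)⁻¹ * ‖V‖ ^ (q - g * n) := by
  have hn : 0 < ‖V‖ := hV.trans_le (Complex.re_le_norm V)
  have hVg : 0 < (1 - V.re ^ g) / 2 := by linarith [rpow_lt_one hV.le hV1 (by linarith : 0 < g)]
  rw [cpowKernel, norm_mul, norm_inv, norm_pow, Complex.norm_cpow_real]
  calc ‖V‖ ^ q * (‖1 - V ^ (g : ℂ)‖ ^ n)⁻¹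
      ≤ ‖V‖ ^ q * (((1 - V.re ^ g) / 2 * ‖V‖ ^ g) ^ n)⁻¹ := by
        gcongr
        exact half_one_sub_rpow_re_mul_le_norm_one_sub_cpow hg1 hg2 hV hV1
    _ = (((1 - V.re ^ g) / 2) ^ n)⁻¹ * ‖V‖ ^ (q - g * n) := by
        rw [rpow_sub hn, rpow_mul hn.le, rpow_natCast, mul_pow, mul_inv]
        ring

lemma hasDerivAt_cpowKernel (hV : 0 < V.re) (hVg : 1 - V ^ (g : ℂ) ≠ 0) :
    HasDerivAt (cpowKernel g q n)
      (q * cpowKernel g (q - 1) n V + g * n * cpowKernel g (q + g - 1) (n + 1) V) V := by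
  have hne : V ≠ 0 := Complex.slitPlane_ne_zero (Or.inl hV)
  have hpow (r : ℝ) : HasDerivAt (fun W : ℂ ↦ W ^ (r : ℂ)) (r * V ^ ((r - 1 : ℝ) : ℂ)) V := by
    simpa using (hasDerivAt_id V).cpow_const (c := (r : ℂ)) (Or.inl hV)
  refine ((hpow q).mul ((((hpow g).const_sub 1).fun_pow n).inv (pow_ne_zero _ hVg))).congr_deriv ?_
  have hexp : V ^ ((q + g - 1 : ℝ) : ℂ) = V ^ (q : ℂ) * V ^ ((g - 1 : ℝ) : ℂ) := by
    rw [← Complex.cpow_add _ _ hne]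
    push_cast
    ring_nf
  rw [cpowKernel, cpowKernel, hexp]
  rcases n with _ | n
  · simp
  · simp only [Pi.inv_apply, Nat.add_sub_cancel]
    field_simp
    ring

lemma integrable_cpowKernel (hg1 : 1 ≤ g) (hg2 : g ≤ 2) (hc : 0 < c) (hc1 : c < 1)
    (hq : q - g * n < -1) : Integrable fun τ ↦ cpowKernel g q n (verticalLine c τ) := by
  refine ((integrable_norm_verticalLine_rpow hc hq).const_mul
    (((1 - c ^ g) / 2) ^ n)⁻¹).mono' ?_ (Eventually.of_forall fun τ ↦ ?_)
  · refine Continuous.aestronglyMeasurable (continuous_iff_continuousAt.2 fun τ ↦ ?_)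
    have hτ : 0 < (verticalLine c τ).re := by simpa
    exact (hasDerivAt_cpowKernel hτ (one_sub_cpow_ne_zero (by linarith) hg2 hτ
      (verticalLine_ne_one hc1 τ))).continuousAt.comp (continuous_verticalLine c).continuousAt
  · simpa using norm_cpowKernel_le (V := verticalLine c τ) (q := q) (n := n) hg1 hg2 (by simpa)
      (by simpa)

lemma integral_cpowKernel_succ (hg1 : 1 ≤ g) (hg2 : g ≤ 2) (hc : 0 < c) (hc1 : c < 1)
    (hq : q - g * n < -1) :
    g * n * ∫ τ, cpowKernel g (q + g - 1) (n + 1) (verticalLine c τ) =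
      -q * ∫ τ, cpowKernel g (q - 1) n (verticalLine c τ) := by
  have hint : Integrable fun τ ↦ cpowKernel g (q - 1) n (verticalLine c τ) :=
    integrable_cpowKernel hg1 hg2 hc hc1 (by linarith)
  have hint' : Integrable fun τ ↦ cpowKernel g (q + g - 1) (n + 1) (verticalLine c τ) :=
    integrable_cpowKernel hg1 hg2 hc hc1 (by push_cast; linarith)
  have hderiv (τ : ℝ) := (hasDerivAt_cpowKernel (q := q) (n := n) (V := verticalLine c τ) (by simpa)
    (one_sub_cpow_ne_zero (by linarith) hg2 (by simpa) (verticalLine_ne_one hc1 τ))).comp_of_eq τ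
      (hasDerivAt_verticalLine c τ) rfl
  have h := integral_eq_zero_of_hasDerivAt_of_integrable hderiv
    (((hint.const_mul _).add (hint'.const_mul _)).mul_const _)
    (integrable_cpowKernel hg1 hg2 hc hc1 hq)
  rw [integral_mul_const, integral_add (hint.const_mul _) (hint'.const_mul _), integral_const_mul,
    integral_const_mul, mul_eq_zero, or_iff_left Complex.I_ne_zero] at h
  linear_combination h

lemma dslope_cpow_of_ne (hV1 : V ≠ 1) :
    dslope (fun W : ℂ ↦ W ^ (g : ℂ)) 1 V = (1 - V ^ (g : ℂ)) / (1 - V) := by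
  rw [dslope_of_ne _ hV1, slope_def_field, Complex.one_cpow, ← neg_sub, ← neg_sub 1 V,
    neg_div_neg_eq]

lemma dslope_cpow_one : dslope (fun W : ℂ ↦ W ^ (g : ℂ)) 1 1 = g := by
  simpa using ((hasDerivAt_id (1 : ℂ)).cpow_const (c := (g : ℂ)) (by simp)).deriv

lemma dslope_cpow_ne_zero (hg : 0 < g) (hg2 : g ≤ 2) (hV : 0 < V.re) :
    dslope (fun W : ℂ ↦ W ^ (g : ℂ)) 1 V ≠ 0 := by
  rcases eq_or_ne V 1 with rfl | hV1
  · rw [dslope_cpow_one]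
    exact_mod_cast hg.ne'
  · rw [dslope_cpow_of_ne hV1]
    exact div_ne_zero (one_sub_cpow_ne_zero hg hg2 hV hV1) (sub_ne_zero.2 hV1.symm)

lemma differentiableOn_cpow_div_dslope (hg : 0 < g) (hg2 : g ≤ 2) :
    DifferentiableOn ℂ (fun V ↦ g * V ^ (q : ℂ) / dslope (fun W : ℂ ↦ W ^ (g : ℂ)) 1 V)
      {V | 0 < V.re} := by
  have hcpow (r : ℝ) : DifferentiableOn ℂ (fun V : ℂ ↦ V ^ (r : ℂ)) {V | 0 < V.re} := fun V hV ↦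
    (differentiableAt_cpow_const hV r).differentiableWithinAt
  have hhalf : {V : ℂ | 0 < V.re} ∈ nhds 1 :=
    (isOpen_lt continuous_const Complex.continuous_re).mem_nhds (by simp)
  exact ((hcpow q).const_mul _).div ((Complex.differentiableOn_dslope hhalf).2 (hcpow g))
    fun V hV ↦ dslope_cpow_ne_zero hg hg2 hV

lemma norm_cpow_div_dslope_le (hg1 : 1 ≤ g) (hV : 2 ≤ ‖V‖) :
    ‖g * V ^ (q : ℂ) / dslope (fun W : ℂ ↦ W ^ (g : ℂ)) 1 V‖ ≤ 3 * g * ‖V‖ ^ (q + 1 - g) := by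
  have hn : 0 < ‖V‖ := by linarith
  have hV1 : V ≠ 1 := by
    rintro rfl
    norm_num at hV
  have hnum : ‖1 - V‖ ≤ 3 / 2 * ‖V‖ := by
    have := norm_sub_le 1 V
    rw [norm_one] at this
    linarith
  have hden : ‖V‖ ^ g / 2 ≤ ‖1 - V ^ (g : ℂ)‖ := by
    rw [← Complex.norm_cpow_real]
    refine half_norm_le_norm_one_sub ?_
    rw [Complex.norm_cpow_real]
    simpa using hV.trans (self_le_rpow_of_one_le (by linarith) hg1)
  rw [dslope_cpow_of_ne hV1, div_div_eq_mul_div, norm_div, norm_mul, norm_mul, Complex.norm_real,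
    norm_of_nonneg (by linarith), Complex.norm_cpow_real]
  calc g * ‖V‖ ^ q * ‖1 - V‖ / ‖1 - V ^ (g : ℂ)‖
      ≤ g * ‖V‖ ^ q * (3 / 2 * ‖V‖) / (‖V‖ ^ g / 2) := by gcongr
    _ = 3 * g * ‖V‖ ^ (q + 1 - g) := by
        rw [rpow_sub hn, rpow_add_one hn.ne']
        field_simp

lemma re_integral_cpowKernel_one (hg1 : 1 ≤ g) (hg2 : g ≤ 2) (hc : 0 < c) (hc1 : c < 1)
    (hκ : 0 < κ) : g * (∫ τ, cpowKernel g (g - 1 - g * κ) 1 (verticalLine c τ)).re = 2 * π := by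
  have hg : 0 < g := by linarith
  have hint : Integrable fun τ ↦ (verticalLine c τ)⁻¹ * (1 - verticalLine c τ)⁻¹ := by
    simpa [cpowKernel, Complex.cpow_neg_one] using
      integrable_cpowKernel (g := 1) (q := -1) (n := 1) le_rfl one_le_two hc hc1 (by norm_num)
  have h := re_integral_mul_one_sub_inv (C := 3 * g) (δ := g * κ) hc hc1 (by positivity) hint
    (differentiableOn_cpow_div_dslope (q := g - 1 - g * κ) hg hg2)
    (by rw [dslope_cpow_one, Complex.one_cpow, mul_one, div_self (by exact_mod_cast hg.ne')])
    fun V _ hV ↦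
      (norm_cpow_div_dslope_le hg1 hV).trans_eq (by ring_nf)
  rw [← h, ← Complex.re_ofReal_mul, ← integral_const_mul]
  congr 2 with τ
  have hτ1 := verticalLine_ne_one hc1 τ
  have hne : 1 - verticalLine c τ ≠ 0 := sub_ne_zero.2 hτ1.symm
  rw [dslope_cpow_of_ne hτ1, cpowKernel]
  field_simp

lemma re_integral_cpowKernel (hg1 : 1 ≤ g) (hg2 : g ≤ 2) (hc : 0 < c) (hc1 : c < 1)
    (hκ : 0 < κ) (n : ℕ) :
    g * (∫ τ, cpowKernel g (g - 1 - g * κ) (n + 1) (verticalLine c τ)).re =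
      2 * π * Ring.multichoose κ n := by
  induction n generalizing κ with
  | zero => simpa using re_integral_cpowKernel_one hg1 hg2 hc hc1 hκ
  | succ n ih =>
    have hg : 0 < g := by linarith
    have hrec := congrArg Complex.re (integral_cpowKernel_succ (q := -(g * κ)) (n := n + 1) hg1 hg2
      hc hc1 (by push_cast; nlinarith [mul_pos hg hκ]))
    have ih' := ih (κ := κ + 1) (by linarith)
    rw [show g - 1 - g * (κ + 1) = -(g * κ) - 1 by ring] at ih'
    rw [show -(g * κ) + g - 1 = g - 1 - g * κ by ring] at hrec
    have hre : g * (n + 1) * (∫ τ, cpowKernel g (g - 1 - g * κ) (n + 1 + 1) (verticalLine c τ)).re =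
        g * κ * (∫ τ, cpowKernel g (-(g * κ) - 1) (n + 1) (verticalLine c τ)).re := by
      rw [← Complex.re_ofReal_mul, ← Complex.re_ofReal_mul]
      simpa using hrec
    apply mul_left_cancel₀ (by positivity : (n + 1 : ℝ) ≠ 0)
    linear_combination hre + κ * ih' - 2 * π * succ_mul_multichoose κ n

end Kernel

section BinomialIntegral

lemma hasSum_one_sub_cpow (ν : ℝ) {w : ℂ} (hw : ‖w‖ < 1) :
    HasSum (fun k ↦ ((Ring.choose ν k : ℝ) : ℂ) * (-w) ^ k) ((1 - w) ^ (ν : ℂ)) := by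
  have h := (Complex.one_add_cpow_hasFPowerSeriesOnBall_zero (a := (ν : ℂ))).hasSum (y := -w)
    (by simpa [enorm_eq_nnnorm, ← NNReal.coe_lt_coe] using hw)
  rw [zero_add, ← sub_eq_add_neg] at h
  simp only [binomialSeries_apply, List.prod_ofFn, Finset.prod_const, Finset.card_univ,
    Fintype.card_fin, smul_eq_mul] at h
  simpa only [Complex.ofReal_choose] using h

lemma continuousAt_one_sub_cpow {ν : ℝ} (hν : 0 < ν) {w : ℂ} (hw : ‖w‖ ≤ 1) :
    ContinuousAt (fun z : ℂ ↦ (1 - z) ^ (ν : ℂ)) w := by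
  have hcont : ContinuousAt (fun z : ℂ ↦ z ^ (ν : ℂ)) (1 - w) := by
    rcases eq_or_ne (1 - w) 0 with h0 | h0
    · rw [h0]
      exact (Complex.continuousAt_cpow_zero_of_re_pos (by simpa using hν)).comp
        (f := fun z : ℂ ↦ (z, (ν : ℂ))) (by fun_prop)
    · refine continuousAt_id.cpow continuousAt_const ?_
      by_contra hslit
      have hre : (1 - w).re = 0 := le_antisymm (not_lt.1 fun h ↦ hslit (Or.inl h))
        (by simpa using (Complex.re_le_norm w).trans hw)
      exact h0 (Complex.ext hre (by_contra fun h ↦ hslit (Or.inr h)))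
  exact hcont.comp (f := fun z : ℂ ↦ 1 - z) (by fun_prop)

variable {Ω : Type*} [MeasurableSpace Ω] {μ : Measure Ω} {J W : Ω → ℂ} {ν : ℝ}

lemma hasSum_integral_mul_one_sub_cpow {r : ℝ} (hJ : Integrable J μ) (hW : AEStronglyMeasurable W μ)
    (hr0 : 0 ≤ r) (hr : r < 1) (hWr : ∀ x, ‖W x‖ ≤ r) :
    HasSum (fun k ↦ ∫ x, J x * (((Ring.choose ν k : ℝ) : ℂ) * (-W x) ^ k) ∂μ)
      (∫ x, J x * (1 - W x) ^ (ν : ℂ) ∂μ) := by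
  have hsum : Summable fun k ↦ |Ring.choose ν k| * r ^ k := by
    have hr' : |r| < 1 := by rwa [abs_of_nonneg hr0]
    simpa [abs_mul, abs_of_nonneg hr0] using (hasSum_one_sub_rpow ν hr').summable.abs
  refine hasSum_integral_of_dominated_convergence (fun k x ↦ ‖J x‖ * (|Ring.choose ν k| * r ^ k))
    (fun k ↦ hJ.1.mul ((hW.neg.pow k).const_mul _))
    (fun k ↦ Eventually.of_forall fun x ↦ ?_) (Eventually.of_forall fun x ↦ hsum.mul_left _) ?_
    (Eventually.of_forall fun x ↦ (hasSum_one_sub_cpow ν ((hWr x).trans_lt hr)).mul_left _)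
  · rw [norm_mul, norm_mul, norm_pow, norm_neg, Complex.norm_real, norm_eq_abs]
    gcongr
    exact hWr x
  · simp_rw [tsum_mul_left]
    exact hJ.norm.mul_const _

lemma tendsto_integral_mul_one_sub_cpow (hν : 0 < ν) (hJ : Integrable J μ) (hW : Measurable W)
    (hW1 : ∀ x, ‖W x‖ ≤ 1) :
    Tendsto (fun t : ℝ ↦ ∫ x, J x * (1 - t * W x) ^ (ν : ℂ) ∂μ) (nhdsWithin 1 (Iio 1))
      (nhds (∫ x, J x * (1 - W x) ^ (ν : ℂ) ∂μ)) := by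
  refine tendsto_integral_filter_of_dominated_convergence (fun x ↦ ‖J x‖ * 2 ^ ν)
    (Eventually.of_forall fun t ↦ hJ.1.mul
      ((measurable_const.sub (hW.const_mul _)).pow_const _).aestronglyMeasurable) ?_
    (hJ.norm.mul_const _) (Eventually.of_forall fun x ↦ ?_)
  · filter_upwards [Ioo_mem_nhdsLT one_pos] with t ht
    refine Eventually.of_forall fun x ↦ ?_
    have htW : ‖t * W x‖ ≤ 1 := by
      rw [norm_mul, Complex.norm_of_nonneg ht.1.le]
      exact mul_le_one₀ ht.2.le (norm_nonneg _) (hW1 x)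
    rw [norm_mul, Complex.norm_cpow_real]
    gcongr
    refine (norm_sub_le _ _).trans ?_
    rw [norm_one]
    linarith
  · refine (Tendsto.const_mul _ ?_).mono_left nhdsWithin_le_nhds
    have hlim : Tendsto (fun t : ℝ ↦ t * W x) (nhds 1) (nhds (W x)) := by
      simpa using (Complex.continuous_ofReal.tendsto 1).mul_const (W x)
    exact (continuousAt_one_sub_cpow hν (hW1 x)).tendsto.comp hlim

end BinomialIntegral

section Representation

variable {α a b g c u : ℝ} {n : ℕ} {p : ℝ[X]}

lemma norm_mul_cpow_neg_le {V : ℂ} {d : ℝ} (hc : 0 < c) (hd : 0 ≤ d) (hV : c ≤ ‖V‖) :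
    ‖u * V ^ ((-d : ℝ) : ℂ)‖ ≤ |u| / c ^ d := by
  rw [norm_mul, Complex.norm_real, norm_eq_abs, Complex.norm_cpow_real, rpow_neg (norm_nonneg _),
    ← div_eq_mul_inv]
  gcongr

lemma cpowKernel_mul_pow {V : ℂ} (hV : V ≠ 0) (k : ℕ) :
    cpowKernel g (g - 1 - g * ((a + 1) / α)) n V * (V ^ ((-(g / α) : ℝ) : ℂ)) ^ k =
      cpowKernel g (g - 1 - g * ((a + 1 + k) / α)) n V := by
  have hexp : V ^ ((g - 1 - g * ((a + 1 + k) / α) : ℝ) : ℂ) =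
      V ^ ((g - 1 - g * ((a + 1) / α) : ℝ) : ℂ) * (V ^ ((-(g / α) : ℝ) : ℂ)) ^ k := by
    rw [← Complex.cpow_mul_nat, ← Complex.cpow_add _ _ hV]
    push_cast
    ring_nf
  rw [cpowKernel, cpowKernel, hexp]
  ring

lemma measurable_mul_verticalLine_cpow (q : ℝ) :
    Measurable fun τ ↦ u * verticalLine c τ ^ (q : ℂ) :=
  ((continuous_verticalLine c).measurable.pow_const _).const_mul _

lemma integrable_cpowKernel_verticalLine {κ : ℝ} (hg1 : 1 ≤ g) (hg2 : g ≤ 2) (hc : 0 < c)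
    (hc1 : c < 1) (hκ : 0 < κ) (n : ℕ) :
    Integrable fun τ ↦ cpowKernel g (g - 1 - g * κ) (n + 1) (verticalLine c τ) := by
  have hg : 0 < g := by linarith
  refine integrable_cpowKernel hg1 hg2 hc hc1 ?_
  push_cast
  nlinarith [mul_pos hg hκ, mul_nonneg hg.le n.cast_nonneg]

lemma IsJacobiBiorthogonal.two_pi_mul_eval_of_lt (hp : IsJacobiBiorthogonal α a b n p)
    (hα : 0 < α) (ha : -1 < a) (hb : -1 < b) (hg1 : 1 ≤ g) (hg2 : g ≤ 2) (hc : 0 < c) (hc1 : c < 1)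
    (hu : |u| < c ^ (g / α)) :
    2 * π * (p.eval u * (1 - u) ^ b) =
      g * (∫ τ, cpowKernel g (g - 1 - g * ((a + 1) / α)) (n + 1) (verticalLine c τ) *
        (1 - u * verticalLine c τ ^ ((-(g / α) : ℝ) : ℂ)) ^ ((n + b : ℝ) : ℂ)).re := by
  have hd : 0 ≤ g / α := by positivity
  have hcd : 0 < c ^ (g / α) := by positivity
  have hu1 : |u| < 1 := hu.trans_le (rpow_le_one hc.le hc1.le hd)
  have hterm (k : ℕ) : (∫ τ, cpowKernel g (g - 1 - g * ((a + 1) / α)) (n + 1) (verticalLine c τ) *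
        (((Ring.choose (n + b) k : ℝ) : ℂ) *
          (-(u * verticalLine c τ ^ ((-(g / α) : ℝ) : ℂ))) ^ k)) =
      ((Ring.choose (n + b) k * (-u) ^ k : ℝ) : ℂ) *
        ∫ τ, cpowKernel g (g - 1 - g * ((a + 1 + k) / α)) (n + 1) (verticalLine c τ) := by
    rw [← integral_const_mul]
    congr with τ
    have hV : verticalLine c τ ≠ 0 := fun h ↦ hc.ne' (by simpa using congrArg Complex.re h)
    rw [← cpowKernel_mul_pow hV]
    push_cast
    ring
  have hkernel := hasSum_integral_mul_one_sub_cpow (ν := n + b)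
    (integrable_cpowKernel_verticalLine hg1 hg2 hc hc1 (div_pos (by linarith : 0 < a + 1) hα) n)
    (measurable_mul_verticalLine_cpow (u := u) (-(g / α))).aestronglyMeasurable (by positivity)
    ((div_lt_one hcd).2 hu) fun τ ↦ norm_mul_cpow_neg_le hc hd (le_norm_verticalLine c τ)
  simp_rw [hterm] at hkernel
  have hre := (Complex.reCLM.hasSum hkernel).mul_left g
  simp only [Complex.reCLM_apply, Complex.re_ofReal_mul] at hre
  refine ((hp.hasSum_eval_mul_rpow hα ha hb hu1).mul_left (2 * π)).unique
    (hre.congr_fun fun k ↦ ?_)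
  have hκ : 0 < (a + 1 + k) / α := div_pos (by linarith [k.cast_nonneg (α := ℝ)]) hα
  linear_combination -(Ring.choose (n + b) k * (-u) ^ k) *
    re_integral_cpowKernel hg1 hg2 hc hc1 hκ n

lemma IsJacobiBiorthogonal.two_pi_mul_eval (hp : IsJacobiBiorthogonal α a b n p)
    (hα : 0 < α) (ha : -1 < a) (hb : -1 < b) (hn : 1 ≤ n) (hg1 : 1 ≤ g) (hg2 : g ≤ 2) (hc : 0 < c)
    (hc1 : c < 1) (hu : |u| ≤ c ^ (g / α)) :
    2 * π * (p.eval u * (1 - u) ^ b) =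
      g * (∫ τ, cpowKernel g (g - 1 - g * ((a + 1) / α)) (n + 1) (verticalLine c τ) *
        (1 - u * verticalLine c τ ^ ((-(g / α) : ℝ) : ℂ)) ^ ((n + b : ℝ) : ℂ)).re := by
  have hd : 0 < g / α := by positivity
  have hcd : 0 < c ^ (g / α) := by positivity
  have hu1 : u < 1 := (le_abs_self u).trans_lt (hu.trans_lt (rpow_lt_one hc.le hc1 hd))
  have hν : 0 < n + b := by linarith [(by exact_mod_cast hn : (1 : ℝ) ≤ n)]
  have hleft : Tendsto (fun t ↦ 2 * π * (p.eval (t * u) * (1 - t * u) ^ b)) (nhdsWithin 1 (Iio 1))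
      (nhds (2 * π * (p.eval u * (1 - u) ^ b))) := by
    have : ContinuousAt (fun t ↦ 2 * π * (p.eval (t * u) * (1 - t * u) ^ b)) 1 :=
      continuousAt_const.mul ((p.continuous.comp (by fun_prop)).continuousAt.mul
        (ContinuousAt.rpow_const (by fun_prop) (Or.inl (by linarith))))
    simpa using this.tendsto.mono_left nhdsWithin_le_nhds
  have hright := tendsto_integral_mul_one_sub_cpow hν
    (integrable_cpowKernel_verticalLine hg1 hg2 hc hc1 (div_pos (by linarith : 0 < a + 1) hα) n)
    (measurable_mul_verticalLine_cpow (u := u) (-(g / α))) fun τ ↦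
      (norm_mul_cpow_neg_le hc hd.le (le_norm_verticalLine c τ)).trans ((div_le_one hcd).2 hu)
  refine tendsto_nhds_unique hleft
    ((((Complex.continuous_re.tendsto _).comp hright).const_mul g).congr' ?_)
  filter_upwards [Ioo_mem_nhdsLT one_pos] with t ht
  have htu : |t * u| < c ^ (g / α) := by
    rw [abs_mul, abs_of_pos ht.1]
    exact (mul_le_mul_of_nonneg_left hu ht.1.le).trans_lt (mul_lt_of_lt_one_left hcd ht.2)
  rw [hp.two_pi_mul_eval_of_lt hα ha hb hg1 hg2 hc hc1 htu]
  simp [mul_assoc]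

end Representation

section Trigonometry

lemma mul_sin_le_sin_mul {l x : ℝ} (hl0 : 0 ≤ l) (hl1 : l ≤ 1) (hx0 : 0 ≤ x) (hx : x ≤ π) :
    l * sin x ≤ sin (l * x) := by
  simpa using strictConcaveOn_sin_Icc.concaveOn.2 (left_mem_Icc.2 pi_pos.le) ⟨hx0, hx⟩
    (sub_nonneg.2 hl1) hl0 (by ring)

lemma one_sub_mul_one_add_half_le_cos {d : ℝ} (hd0 : 0 ≤ d) (hd1 : d ≤ 1) :
    (1 - d) * (1 + d / 2) ≤ cos (d * (π / 2)) := by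
  set y := sin (π * (1 - d) / 6) with hy
  have hcos : cos (d * (π / 2)) = 3 * y - 4 * y ^ 3 := by
    rw [hy, ← sin_three_mul, ← sin_pi_div_two_sub]
    ring_nf
  have hy1 : (1 - d) / 2 ≤ y := by
    have h := mul_sin_le_sin_mul (sub_nonneg.2 hd1) (by linarith) (x := π / 6)
      (by positivity) (by linarith [pi_pos])
    rw [sin_pi_div_six] at h
    rw [hy, show π * (1 - d) / 6 = (1 - d) * (π / 6) by ring]
    linarith
  have hy2 : y ≤ 1 / 2 := by
    rw [hy, ← sin_pi_div_six]
    exact sin_le_sin_of_le_of_le_pi_div_two (by nlinarith [pi_pos]) (by linarith [pi_pos])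
      (by nlinarith [pi_pos])
  -- `3 * y - 4 * y ^ 3` is increasing on `[0, 1 / 2]`
  have hmono : 0 ≤ (y - (1 - d) / 2) * (3 - 4 * (y ^ 2 + y * ((1 - d) / 2) + ((1 - d) / 2) ^ 2)) :=
    mul_nonneg (by linarith) (by nlinarith)
  rw [hcos]
  nlinarith [mul_nonneg hd0 (sq_nonneg (1 - d))]

lemma rpow_le_one_sub_add_mul {d x : ℝ} (hd0 : 0 ≤ d) (hd1 : d ≤ 1) (hx : 0 ≤ x) :
    x ^ d ≤ 1 - d + d * x := by
  simpa using geom_mean_le_arith_mean2_weighted (sub_nonneg.2 hd1) hd0 zero_le_one hx (by ring)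

lemma sin_pos_of_mem_Ioo_half {s : ℝ} (hs : s ∈ Ioo 0 (π / 2)) : 0 < sin s :=
  sin_pos_of_pos_of_lt_pi hs.1 (by linarith [hs.2, pi_pos])

lemma sin_mul_pos {k s : ℝ} (hk0 : 0 < k) (hk2 : k ≤ 2) (hs : s ∈ Ioo 0 (π / 2)) :
    0 < sin (k * s) :=
  sin_pos_of_pos_of_lt_pi (mul_pos hk0 hs.1) (by nlinarith [hs.1, hs.2])

lemma hasDerivAt_sin_mul (k s : ℝ) : HasDerivAt (fun x ↦ sin (k * x)) (k * cos (k * s)) s := by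
  simpa [mul_comm] using ((hasDerivAt_id s).const_mul k).sin

lemma hasDerivAt_sin_mul_div_sin (k : ℝ) {s : ℝ} (hs : sin s ≠ 0) :
    HasDerivAt (fun x ↦ sin (k * x) / sin x)
      ((k * cos (k * s) * sin s - sin (k * s) * cos s) / sin s ^ 2) s :=
  (hasDerivAt_sin_mul k s).div (hasDerivAt_sin s) hs

lemma monotoneOn_sin_mul_div_sin {l : ℝ} (hl0 : 0 ≤ l) (hl1 : l ≤ 1) :
    MonotoneOn (fun s ↦ sin (l * s) / sin s) (Ioo 0 (π / 2)) := by
  refine monotoneOn_of_hasDerivAt_nonneg (convex_Ioo _ _)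
    (fun s hs ↦ hasDerivAt_sin_mul_div_sin l (sin_pos_of_mem_Ioo_half hs).ne') fun s hs ↦ ?_
  have hs := interior_subset hs
  have h := mul_sin_le_sin_mul (l := (1 - l) / (1 + l)) (x := (1 + l) * s)
    (div_nonneg (by linarith) (by linarith)) ((div_le_one (by linarith)).2 (by linarith))
    (mul_nonneg (by linarith) hs.1.le) (by nlinarith [hs.1, hs.2])
  rw [← mul_assoc, div_mul_cancel₀ _ (by linarith), div_mul_eq_mul_div, div_le_iff₀ (by linarith),
    show (1 + l) * s = s + l * s by ring, show (1 - l) * s = s - l * s by ring, sin_add,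
    sin_sub] at h
  exact div_nonneg (by linarith) (sq_nonneg _)

lemma concaveOn_log_sin_sub_log : ConcaveOn ℝ (Ioo 0 π) fun x ↦ log (sin x) - log x := by
  have hsin {x : ℝ} (hx : x ∈ Ioo 0 π) : 0 < sin x := sin_pos_of_mem_Ioo hx
  refine concaveOn_of_hasDerivWithinAt2_nonpos (convex_Ioo _ _)
    (f' := fun x ↦ cos x / sin x - x⁻¹) (f'' := fun x ↦ (x ^ 2)⁻¹ - (sin x ^ 2)⁻¹)
    (fun x hx ↦ ?_) (fun x hx ↦ ?_) (fun x hx ↦ ?_) fun x hx ↦ ?_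
  · exact ((continuous_sin.continuousAt.log (hsin hx).ne').sub
      (continuousAt_log hx.1.ne')).continuousWithinAt
  · have hx := interior_subset hx
    exact (((hasDerivAt_sin x).log (hsin hx).ne').sub (hasDerivAt_log hx.1.ne')).hasDerivWithinAt
  · have hx := interior_subset hx
    have h0 := (hsin hx).ne'
    refine ((((hasDerivAt_cos x).div (hasDerivAt_sin x) h0).sub
      (hasDerivAt_inv hx.1.ne')).congr_deriv ?_).hasDerivWithinAt
    field_simp
    linear_combination -sin_sq_add_cos_sq x
  · have hx := interior_subset hx
    have := hsin hx
    rw [sub_nonpos]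
    gcongr
    exact sin_le hx.1.le

lemma mul_sin_mul_cos_rpow_le_sin {m s : ℝ} (hm0 : 0 ≤ m) (hm1 : m ≤ 1) (hs : s ∈ Ioo 0 (π / 2)) :
    (1 + m) * (sin s * cos s ^ m) ≤ sin ((1 + m) * s) := by
  have hs0 := hs.1
  have hsin := sin_pos_of_mem_Ioo_half hs
  have hcos := cos_pos_of_mem_Ico (Ioo_subset_Ico_self hs)
  have hsinm := sin_mul_pos (by linarith : 0 < 1 + m) (by linarith) hs
  have h := concaveOn_log_sin_sub_log.2 (x := s) ⟨hs.1, by linarith [hs.2, pi_pos]⟩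
    (y := 2 * s) ⟨by linarith, by linarith [hs.2]⟩ (sub_nonneg.2 hm1) hm0 (by ring)
  simp only [smul_eq_mul] at h
  rw [show (1 - m) * s + m * (2 * s) = (1 + m) * s by ring, sin_two_mul,
    log_mul (by positivity) hcos.ne', log_mul two_ne_zero hsin.ne', log_mul two_ne_zero hs0.ne',
    log_mul (by linarith) hs0.ne'] at h
  rw [← log_le_log_iff (by positivity) hsinm, log_mul (by linarith) (by positivity),
    log_mul hsin.ne' (by positivity), log_rpow hcos]
  linarith

end Trigonometry

section Saddle

lemma cos_rpow_mul_sin_pow_three_le {d s : ℝ} (hd0 : 0 ≤ d) (hd1 : d ≤ 1)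
    (hs : s ∈ Ioo 0 (π / 2)) :
    (2 + d) * cos s ^ d * sin s ^ 3 ≤
      sin ((1 + d) * s) * (1 + sin s ^ 2) - (1 + d) * sin s * cos s * cos ((1 + d) * s) := by
  have hsin := sin_pos_of_mem_Ioo_half hs
  have hcos := cos_pos_of_mem_Ico (Ioo_subset_Ico_self hs)
  have hds0 : 0 ≤ d * s := mul_nonneg hd0 hs.1.le
  have hds1 : d * s ≤ d * (π / 2) := mul_le_mul_of_nonneg_left hs.2.le hd0
  have hsind : d * sin s ≤ sin (d * s) :=
    mul_sin_le_sin_mul hd0 hd1 hs.1.le (by linarith [hs.2, pi_pos])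
  have hcosd : (1 - d) * (1 + d / 2) ≤ cos (d * s) :=
    (one_sub_mul_one_add_half_le_cos hd0 hd1).trans
      (cos_le_cos_of_nonneg_of_le_pi hds0 (by nlinarith [pi_pos]) hds1)
  have hpow : cos s ^ d ≤ 1 - d + d * cos s := rpow_le_one_sub_add_mul hd0 hd1 hcos.le
  have hcoscos : cos s * cos (d * s) ≤ 1 := by
    nlinarith [cos_le_one s, cos_le_one (d * s)]
  have hdefect : 0 ≤ sin (d * s) - d * (sin s * (cos s * cos (d * s))) := by
    nlinarith [mul_nonneg (mul_nonneg hd0 hsin.le) (sub_nonneg.2 hcoscos)]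
  have hexpand : sin ((1 + d) * s) * (1 + sin s ^ 2) -
        (1 + d) * sin s * cos s * cos ((1 + d) * s) =
      2 * sin s ^ 3 * cos (d * s) + (2 + d) * sin s ^ 2 * cos s * sin (d * s) +
        cos s * (sin (d * s) - d * (sin s * (cos s * cos (d * s)))) := by
    rw [show (1 + d) * s = s + d * s by ring, sin_add, cos_add]
    linear_combination -(cos (d * s) * sin s) * sin_sq_add_cos_sq s
  calc (2 + d) * cos s ^ d * sin s ^ 3
      ≤ (2 + d) * (1 - d + d * cos s) * sin s ^ 3 := by gcongr
    _ = 2 * sin s ^ 3 * ((1 - d) * (1 + d / 2)) +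
          (2 + d) * sin s ^ 2 * cos s * (d * sin s) + cos s * 0 := by ring
    _ ≤ 2 * sin s ^ 3 * cos (d * s) + (2 + d) * sin s ^ 2 * cos s * sin (d * s) +
          cos s * (sin (d * s) - d * (sin s * (cos s * cos (d * s)))) := by gcongr
    _ = _ := hexpand.symm

lemma antitoneOn_cos_sq_mul_sub_cos_rpow {d : ℝ} (hd0 : 0 ≤ d) (hd1 : d ≤ 1) :
    AntitoneOn (fun s ↦ cos s ^ 2 * (sin ((1 + d) * s) / sin s - cos s ^ d)) (Ioo 0 (π / 2)) := by
  refine antitoneOn_of_hasDerivAt_nonpos (convex_Ioo _ _)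
    (f' := fun s ↦ cos s / sin s ^ 2 * ((2 + d) * cos s ^ d * sin s ^ 3 -
      (sin ((1 + d) * s) * (1 + sin s ^ 2) - (1 + d) * sin s * cos s * cos ((1 + d) * s))))
    (fun s hs ↦ ?_) fun s hs ↦ ?_
  · have hsin := (sin_pos_of_mem_Ioo_half hs).ne'
    have hcos := cos_pos_of_mem_Ico (Ioo_subset_Ico_self hs)
    refine (((hasDerivAt_cos s).fun_pow 2).mul ((hasDerivAt_sin_mul_div_sin (1 + d) hsin).fun_sub
      (hasDerivAt_cos_rpow hcos d))).congr_deriv ?_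
    rw [tan_eq_sin_div_cos]
    field_simp
    linear_combination -(cos s * sin ((1 + d) * s)) * sin_sq_add_cos_sq s
  · have hs := interior_subset hs
    have hcos := cos_pos_of_mem_Ico (Ioo_subset_Ico_self hs)
    exact mul_nonpos_of_nonneg_of_nonpos (by positivity)
      (sub_nonpos.2 (cos_rpow_mul_sin_pow_three_le hd0 hd1 hs))

lemma antitoneOn_cos_sq_mul_sub_mul_cos_rpow {d κ : ℝ} (hd0 : 0 ≤ d) (hd1 : d ≤ 1) (hκ : κ ≤ 1) :
    AntitoneOn (fun s ↦ cos s ^ 2 * (sin ((1 + d) * s) / sin s - κ * cos s ^ d))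
      (Ioo 0 (π / 2)) := by
  intro x hx y hy hxy
  have hcosy := cos_pos_of_mem_Ico (Ioo_subset_Ico_self hy)
  have hcos : cos y ≤ cos x :=
    cos_le_cos_of_nonneg_of_le_pi hx.1.le (by linarith [hy.2, pi_pos]) hxy
  have hpow : cos y ^ 2 * cos y ^ d ≤ cos x ^ 2 * cos x ^ d := by gcongr
  have hanti := antitoneOn_cos_sq_mul_sub_cos_rpow hd0 hd1 hx hy hxy
  simp only at hanti ⊢
  linarith [mul_le_mul_of_nonneg_left hpow (sub_nonneg.2 hκ)]

/-- The ratio `k * sin s * cos s / sin (k * s)`; the function `Th α` of the statement is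
`θ ↦ sinRatio (2 / (1 + α)) ((π - θ) / 2)`. -/
noncomputable def sinRatio (k s : ℝ) : ℝ := k * sin s * cos s / sin (k * s)

variable {d s σ κ Q : ℝ}

lemma sinRatio_pos {k : ℝ} (hk0 : 0 < k) (hk2 : k ≤ 2) (hs : s ∈ Ioo 0 (π / 2)) :
    0 < sinRatio k s :=
  div_pos (mul_pos (mul_pos hk0 (sin_pos_of_mem_Ioo_half hs))
    (cos_pos_of_mem_Ico (Ioo_subset_Ico_self hs))) (sin_mul_pos hk0 hk2 hs)

lemma sinRatio_le_cos {k : ℝ} (hk0 : 0 < k) (hk1 : k ≤ 1) (hs : s ∈ Ioo 0 (π / 2)) :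
    sinRatio k s ≤ cos s := by
  rw [sinRatio, div_le_iff₀ (sin_mul_pos hk0 (by linarith) hs), mul_comm (cos s)]
  exact mul_le_mul_of_nonneg_right
    (mul_sin_le_sin_mul hk0.le hk1 hs.1.le (by linarith [hs.2, pi_pos]))
    (cos_pos_of_mem_Ico (Ioo_subset_Ico_self hs)).le

lemma sinRatio_two_sub_le_cos_rpow (hd0 : 0 ≤ d) (hd1 : d ≤ 1) (hs : s ∈ Ioo 0 (π / 2)) :
    sinRatio (2 - d) s ≤ cos s ^ d := by
  have hcos := cos_pos_of_mem_Ico (Ioo_subset_Ico_self hs)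
  have h := mul_sin_mul_cos_rpow_le_sin (sub_nonneg.2 hd1) (by linarith) hs
  rw [show 1 + (1 - d) = 2 - d by ring, rpow_sub hcos, rpow_one, mul_div_assoc', mul_div_assoc',
    div_le_iff₀ (by positivity)] at h
  rw [sinRatio, div_le_iff₀ (sin_mul_pos (by linarith) (by linarith) hs)]
  linarith

lemma sin_mul_sin_one_sub_mul (d s : ℝ) :
    sin (d * s) * sin ((1 - d) * s) - sin ((1 + d) * s) * sin ((2 - d) * s) =
      -(2 * sin s ^ 2 * cos s) := by
  have h1 := sin_sq_add_cos_sq s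
  have h2 := sin_sq_add_cos_sq (d * s)
  rw [show (1 - d) * s = s - d * s by ring, show (1 + d) * s = s + d * s by ring,
    show (2 - d) * s = 2 * s - d * s by ring, sin_sub, sin_add, sin_sub, sin_two_mul, cos_two_mul']
  grind

lemma sin_two_sub_mul_sq_add (d s : ℝ) :
    sin ((2 - d) * s) ^ 2 + ((2 - d) * sin s * cos s) ^ 2 -
        2 * ((2 - d) * sin s * cos s) * sin ((2 - d) * s) * cos (d * s) =
      sin (d * s) ^ 2 + (d * sin s * cos s) ^ 2 -
        2 * (d * sin s * cos s) * sin (d * s) * cos ((2 - d) * s) := by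
  have hsum : sin (d * s) * cos ((2 - d) * s) + cos (d * s) * sin ((2 - d) * s) =
      2 * sin s * cos s := by
    rw [← sin_add, ← sin_two_mul]
    ring_nf
  have hdiff : sin ((2 - d) * s) ^ 2 - sin (d * s) ^ 2 = 2 * sin s * cos s *
      (cos (d * s) * sin ((2 - d) * s) - sin (d * s) * cos ((2 - d) * s)) := by
    rw [← hsum]
    linear_combination sin (d * s) ^ 2 * sin_sq_add_cos_sq ((2 - d) * s) -
      sin ((2 - d) * s) ^ 2 * sin_sq_add_cos_sq (d * s)
  linear_combination hdiff + 2 * (d - 1) * sin s * cos s * hsum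

lemma sinRatio_value_eq (hd0 : 0 < d) (hd1 : d ≤ 1) (hσ : σ ∈ Ioo 0 (π / 2)) :
    1 + sinRatio (2 - d) σ ^ 2 - 2 * sinRatio (2 - d) σ * cos (d * σ) =
      (sin (d * σ) / sin ((2 - d) * σ)) ^ 2 *
        (1 + sinRatio d σ ^ 2 - 2 * sinRatio d σ * cos ((2 - d) * σ)) := by
  have h := sin_two_sub_mul_sq_add d σ
  have h1 := (sin_mul_pos hd0 (by linarith) hσ).ne'
  have h2 := (sin_mul_pos (by linarith : 0 < 2 - d) (by linarith) hσ).ne'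
  rw [sinRatio, sinRatio]
  generalize sin (d * σ) = y, sin ((2 - d) * σ) = z, cos (d * σ) = v,
    cos ((2 - d) * σ) = w at *
  field_simp
  linear_combination h

lemma sinRatio_slope_eq (hd0 : 0 < d) (hd1 : d ≤ 1) (hσ : σ ∈ Ioo 0 (π / 2)) :
    sin (d * σ) / sin ((2 - d) * σ) * (sinRatio d σ + sin ((1 - d) * σ) / sin σ) =
      sin ((1 + d) * σ) / sin σ - sinRatio (2 - d) σ := by
  have h := sin_mul_sin_one_sub_mul d σ
  have h1 := (sin_mul_pos hd0 (by linarith) hσ).ne'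
  have h2 := (sin_mul_pos (by linarith : 0 < 2 - d) (by linarith) hσ).ne'
  have h3 := (sin_pos_of_mem_Ioo_half hσ).ne'
  rw [sinRatio, sinRatio]
  generalize sin (d * σ) = y, sin ((2 - d) * σ) = z, sin ((1 + d) * σ) = v,
    sin ((1 - d) * σ) = w at *
  field_simp
  linear_combination h

end Saddle

section SaddleGap

variable {d s σ κ Q : ℝ}

/-- The slack in `curveNormSq_le_sub_sq`, bounding `|1 - u V ^ (-d)|²` by a multiple of
`|1 - V ^ (2 - d)|²` along the vertical line through the saddle, the point of argument `σ`. -/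
noncomputable def saddleGap (d σ κ Q s : ℝ) : ℝ :=
  (sin (d * σ) / sin ((2 - d) * σ)) ^ 2 *
    (curveNormSq (-(2 - d)) Q s - (Q * cos s ^ (-(2 - d)) - sinRatio d σ) ^ 2) -
      curveNormSq d κ s

/-- The derivative of `saddleGap` up to a positive factor. -/
noncomputable def saddleSlope (d σ κ s : ℝ) : ℝ :=
  sin (d * σ) / sin ((2 - d) * σ) * (sinRatio d σ + sin ((1 - d) * s) / sin s) -
    cos s ^ 2 * (sin ((1 + d) * s) / sin s - κ * cos s ^ d) / cos σ ^ 2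

lemma le_one_of_mul_cos_rpow_eq_sinRatio (hd0 : 0 < d) (hd1 : d ≤ 1) (hσ : σ ∈ Ioo 0 (π / 2))
    (hκ : κ * cos σ ^ d = sinRatio (2 - d) σ) : κ ≤ 1 := by
  have hcos := cos_pos_of_mem_Ico (Ioo_subset_Ico_self hσ)
  refine le_of_mul_le_mul_right ?_ (rpow_pos_of_pos hcos d)
  rw [hκ, one_mul]
  exact sinRatio_two_sub_le_cos_rpow hd0.le hd1 hσ

lemma monotoneOn_saddleSlope (hd0 : 0 < d) (hd1 : d ≤ 1) (hσ : σ ∈ Ioo 0 (π / 2))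
    (hκ : κ * cos σ ^ d = sinRatio (2 - d) σ) :
    MonotoneOn (saddleSlope d σ κ) (Ioo 0 (π / 2)) := by
  intro x hx y hy hxy
  have hr := (div_pos (sin_mul_pos hd0 (by linarith) hσ)
    (sin_mul_pos (by linarith : 0 < 2 - d) (by linarith) hσ)).le
  have hmono := monotoneOn_sin_mul_div_sin (sub_nonneg.2 hd1) (by linarith) hx hy hxy
  have hanti := antitoneOn_cos_sq_mul_sub_mul_cos_rpow hd0.le hd1
    (le_one_of_mul_cos_rpow_eq_sinRatio hd0 hd1 hσ hκ) hx hy hxy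
  unfold saddleSlope
  gcongr

lemma saddleSlope_self (hd0 : 0 < d) (hd1 : d ≤ 1) (hσ : σ ∈ Ioo 0 (π / 2))
    (hκ : κ * cos σ ^ d = sinRatio (2 - d) σ) : saddleSlope d σ κ σ = 0 := by
  have hcos := (cos_pos_of_mem_Ico (Ioo_subset_Ico_self hσ)).ne'
  rw [saddleSlope, sinRatio_slope_eq hd0 hd1 hσ, hκ, mul_div_cancel_left₀ _ (by positivity),
    sub_self]

lemma saddleGap_self (hd0 : 0 < d) (hd1 : d ≤ 1) (hσ : σ ∈ Ioo 0 (π / 2))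
    (hκ : κ * cos σ ^ d = sinRatio (2 - d) σ) (hQ : Q * cos σ ^ (-(2 - d)) = sinRatio d σ) :
    saddleGap d σ κ Q σ = 0 := by
  rw [saddleGap, curveNormSq, curveNormSq, hκ, hQ, sinRatio_value_eq hd0 hd1 hσ, neg_mul, cos_neg]
  ring

lemma saddle_amplitude_eq (hd0 : 0 < d) (hd1 : d ≤ 1) (hσ : σ ∈ Ioo 0 (π / 2))
    (hκ : κ * cos σ ^ d = sinRatio (2 - d) σ) (hQ : Q * cos σ ^ (-(2 - d)) = sinRatio d σ) :
    d * κ * cos σ ^ 2 = (2 - d) * Q * (sin (d * σ) / sin ((2 - d) * σ)) := by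
  have hcos := cos_pos_of_mem_Ico (Ioo_subset_Ico_self hσ)
  have h1 := (sin_mul_pos hd0 (by linarith) hσ).ne'
  have h2 := (sin_mul_pos (by linarith : 0 < 2 - d) (by linarith) hσ).ne'
  have hpow : cos σ ^ (-(2 - d)) = cos σ ^ d / cos σ ^ 2 := by
    rw [show -(2 - d) = d - 2 by ring, rpow_sub hcos, rpow_two]
  have hratio : d * sinRatio (2 - d) σ =
      (2 - d) * sinRatio d σ * (sin (d * σ) / sin ((2 - d) * σ)) := by
    rw [sinRatio, sinRatio]
    field_simp
  rw [← hκ, ← hQ, hpow] at hratio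
  have hpos := (rpow_pos_of_pos hcos d).ne'
  refine mul_right_cancel₀ hpos ?_
  field_simp at hratio ⊢
  linear_combination hratio

lemma hasDerivAt_saddleGap (hs : s ∈ Ico 0 (π / 2)) :
    HasDerivAt (saddleGap d σ κ Q)
      (2 / cos s * ((2 - d) * (Q * cos s ^ (-(2 - d))) * (sin (d * σ) / sin ((2 - d) * σ)) ^ 2 *
          (sin ((1 - d) * s) + sinRatio d σ * sin s) -
        d * (κ * cos s ^ d) * (sin ((1 + d) * s) - κ * cos s ^ d * sin s))) s := by
  have hcos := cos_pos_of_mem_Ico hs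
  refine ((((hasDerivAt_curveNormSq hcos _ _).sub ((((hasDerivAt_cos_rpow hcos (-(2 - d))).const_mul
    Q).sub_const (sinRatio d σ)).fun_pow 2)).const_mul _).sub
    (hasDerivAt_curveNormSq hcos _ _)).congr_deriv ?_
  rw [show (1 + -(2 - d)) * s = -((1 - d) * s) by ring, sin_neg, tan_eq_sin_div_cos]
  field_simp
  push_cast
  ring

lemma hasDerivAt_saddleGap_of_pos (hd0 : 0 < d) (hd1 : d ≤ 1) (hσ : σ ∈ Ioo 0 (π / 2))
    (hκ : κ * cos σ ^ d = sinRatio (2 - d) σ) (hQ : Q * cos σ ^ (-(2 - d)) = sinRatio d σ)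
    (hs : s ∈ Ioo 0 (π / 2)) :
    HasDerivAt (saddleGap d σ κ Q)
      (2 * (2 - d) * (Q * cos s ^ (-(2 - d))) * tan s * (sin (d * σ) / sin ((2 - d) * σ)) *
        saddleSlope d σ κ s) s := by
  refine (hasDerivAt_saddleGap (Ioo_subset_Ico_self hs)).congr_deriv ?_
  have hcos := cos_pos_of_mem_Ico (Ioo_subset_Ico_self hs)
  have hcosσ := (cos_pos_of_mem_Ico (Ioo_subset_Ico_self hσ)).ne'
  have hsin := (sin_pos_of_mem_Ioo_half hs).ne'
  have hpow : cos s ^ d = cos s ^ (-(2 - d)) * cos s ^ 2 := by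
    rw [← rpow_two, ← rpow_add hcos]
    ring_nf
  have hamp : d * (κ * cos s ^ d) = (2 - d) * (Q * cos s ^ (-(2 - d))) *
      (sin (d * σ) / sin ((2 - d) * σ)) * cos s ^ 2 / cos σ ^ 2 := by
    rw [hpow, eq_div_iff (by positivity)]
    linear_combination cos s ^ (-(2 - d)) * cos s ^ 2 * saddle_amplitude_eq hd0 hd1 hσ hκ hQ
  rw [hamp, saddleSlope, tan_eq_sin_div_cos]
  generalize sin (d * σ) / sin ((2 - d) * σ) = r
  field_simp
  ring

lemma saddleGap_factor_nonneg (hd0 : 0 < d) (hd1 : d ≤ 1) (hσ : σ ∈ Ioo 0 (π / 2))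
    (hQ : Q * cos σ ^ (-(2 - d)) = sinRatio d σ) (hs : s ∈ Ioo 0 (π / 2)) :
    0 ≤ 2 * (2 - d) * (Q * cos s ^ (-(2 - d))) * tan s * (sin (d * σ) / sin ((2 - d) * σ)) := by
  have hcos := cos_pos_of_mem_Ico (Ioo_subset_Ico_self hs)
  have htan := tan_nonneg_of_nonneg_of_le_pi_div_two hs.1.le hs.2.le
  have hd2 : 0 < 2 - d := by linarith
  have hr := div_pos (sin_mul_pos hd0 (by linarith) hσ) (sin_mul_pos hd2 (by linarith) hσ)
  have hQ0 : 0 < Q := pos_of_mul_pos_left (hQ ▸ sinRatio_pos hd0 (by linarith) hσ)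
    (rpow_pos_of_pos (cos_pos_of_mem_Ico (Ioo_subset_Ico_self hσ)) _).le
  positivity

lemma antitoneOn_saddleGap (hd0 : 0 < d) (hd1 : d ≤ 1) (hσ : σ ∈ Ioo 0 (π / 2))
    (hκ : κ * cos σ ^ d = sinRatio (2 - d) σ) (hQ : Q * cos σ ^ (-(2 - d)) = sinRatio d σ) :
    AntitoneOn (saddleGap d σ κ Q) (Icc 0 σ) := by
  have hIoo {x : ℝ} (hx : x ∈ interior (Icc 0 σ)) : x ∈ Ioo 0 (π / 2) := by
    rw [interior_Icc] at hx
    exact ⟨hx.1, hx.2.trans hσ.2⟩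
  refine antitoneOn_of_hasDerivWithinAt_nonpos (convex_Icc 0 σ)
    (fun x hx ↦ (hasDerivAt_saddleGap ⟨hx.1, hx.2.trans_lt hσ.2⟩).continuousAt.continuousWithinAt)
    (fun x hx ↦ (hasDerivAt_saddleGap_of_pos hd0 hd1 hσ hκ hQ (hIoo hx)).hasDerivWithinAt)
    fun x hx ↦ mul_nonpos_of_nonneg_of_nonpos
      (saddleGap_factor_nonneg hd0 hd1 hσ hQ (hIoo hx)) ?_
  rw [← saddleSlope_self hd0 hd1 hσ hκ]
  exact monotoneOn_saddleSlope hd0 hd1 hσ hκ (hIoo hx) hσ (interior_subset hx).2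

lemma monotoneOn_saddleGap (hd0 : 0 < d) (hd1 : d ≤ 1) (hσ : σ ∈ Ioo 0 (π / 2))
    (hκ : κ * cos σ ^ d = sinRatio (2 - d) σ) (hQ : Q * cos σ ^ (-(2 - d)) = sinRatio d σ) :
    MonotoneOn (saddleGap d σ κ Q) (Ico σ (π / 2)) := by
  have hIoo {x : ℝ} (hx : x ∈ Ico σ (π / 2)) : x ∈ Ioo 0 (π / 2) := ⟨hσ.1.trans_le hx.1, hx.2⟩
  refine monotoneOn_of_hasDerivAt_nonneg (convex_Ico _ _)
    (fun x hx ↦ hasDerivAt_saddleGap_of_pos hd0 hd1 hσ hκ hQ (hIoo hx)) fun x hx ↦ ?_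
  have hx := interior_subset hx
  refine mul_nonneg (saddleGap_factor_nonneg hd0 hd1 hσ hQ (hIoo hx)) ?_
  rw [← saddleSlope_self hd0 hd1 hσ hκ]
  exact monotoneOn_saddleSlope hd0 hd1 hσ hκ hσ (hIoo hx) hx.1

lemma saddleGap_nonneg (hd0 : 0 < d) (hd1 : d ≤ 1) (hσ : σ ∈ Ioo 0 (π / 2))
    (hκ : κ * cos σ ^ d = sinRatio (2 - d) σ) (hQ : Q * cos σ ^ (-(2 - d)) = sinRatio d σ)
    (hs : s ∈ Ico 0 (π / 2)) : 0 ≤ saddleGap d σ κ Q s := by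
  rw [← saddleGap_self hd0 hd1 hσ hκ hQ]
  rcases le_total s σ with h | h
  · exact antitoneOn_saddleGap hd0 hd1 hσ hκ hQ ⟨hs.1, h⟩ (right_mem_Icc.2 hσ.1.le) h
  · exact monotoneOn_saddleGap hd0 hd1 hσ hκ hQ (left_mem_Ico.2 hσ.2) ⟨h, hs.2⟩ h

end SaddleGap

section Decay

variable {d s σ κ Q u : ℝ} {V : ℂ}

lemma mul_abs_sub_le_abs_cos_sub_cos (hs : s ∈ Icc 0 (π / 2)) (hσ : σ ∈ Icc 0 (π / 2)) :
    sin (σ / 2) / 2 * |s - σ| ≤ |cos s - cos σ| := by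
  have hpi := pi_pos
  have hsum : sin (σ / 2) ≤ sin ((s + σ) / 2) := sin_le_sin_of_le_of_le_pi_div_two
    (by linarith [hσ.1]) (by linarith [hs.2, hσ.2]) (by linarith [hs.1])
  have hσ0 : 0 ≤ sin (σ / 2) := sin_nonneg_of_nonneg_of_le_pi (by linarith [hσ.1])
    (by linarith [hσ.2])
  have hdiff : |s - σ| / 4 ≤ |sin ((s - σ) / 2)| := by
    have h := mul_abs_le_abs_sin (x := (s - σ) / 2)
      (abs_le.2 ⟨by linarith [hs.1, hσ.2], by linarith [hs.2, hσ.1]⟩)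
    rw [abs_div, abs_two] at h
    refine le_trans ?_ h
    have : (1 : ℝ) / 2 ≤ 2 / π := by
      rw [div_le_div_iff₀ two_pos hpi]
      linarith [pi_le_four]
    nlinarith [abs_nonneg (s - σ)]
  calc sin (σ / 2) / 2 * |s - σ| = 2 * sin (σ / 2) * (|s - σ| / 4) := by ring
    _ ≤ 2 * sin ((s + σ) / 2) * |sin ((s - σ) / 2)| :=
      mul_le_mul (by linarith) hdiff (by positivity) (by linarith)
    _ = |cos s - cos σ| := by
      rw [cos_sub_cos, abs_mul, abs_mul, abs_neg, abs_two, abs_of_nonneg (hσ0.trans hsum)]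

lemma rpow_neg_mul_sub_le {g x y : ℝ} (hg : 1 ≤ g) (hy : 0 < y) (hyx : y ≤ x) (hx : x ≤ 1) :
    y ^ (-g) * (x - y) ≤ y ^ (-g) - x ^ (-g) := by
  have hx0 : 0 < x := hy.trans_le hyx
  have hratio : (y / x) ^ g ≤ y / x := by
    simpa using rpow_le_rpow_of_exponent_ge (by positivity) ((div_le_one hx0).2 hyx) hg
  have hxg : x ^ (-g) = y ^ (-g) * (y / x) ^ g := by
    rw [div_rpow hy.le hx0.le, rpow_neg hy.le, rpow_neg hx0.le]
    field_simp
  have hyx' : x - y ≤ 1 - y / x := by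
    rw [one_sub_div hx0.ne']
    exact le_div_self (by linarith) hx0 hx
  rw [hxg]
  have hpos : 0 < y ^ (-g) := by positivity
  nlinarith

lemma half_mul_abs_sub_le_abs_rpow_neg_sub {g x y : ℝ} (hg : 1 ≤ g) (hx0 : 0 < x) (hx1 : x ≤ 1)
    (hy0 : 0 < y) (hy1 : y ≤ 1) (hQ : 0 < Q) (hQy : Q * y ^ (-g) ≤ 1) :
    Q / 2 * (1 + Q * x ^ (-g)) * |x - y| ≤ |Q * x ^ (-g) - Q * y ^ (-g)| := by
  have hy : 1 ≤ y ^ (-g) := one_le_rpow_of_pos_of_le_one_of_nonpos hy0 hy1 (by linarith)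
  have hQ1 : Q ≤ 1 := by nlinarith
  rcases le_total y x with h | h
  · have hle := mul_le_mul_of_nonneg_left (rpow_neg_mul_sub_le hg hy0 h hx1) hQ.le
    have hpos : 0 ≤ x - y := by linarith
    rw [abs_of_nonneg hpos, abs_sub_comm]
    refine le_trans ?_ (le_trans hle (by rw [mul_sub]; exact le_abs_self _))
    have hxy : Q * x ^ (-g) ≤ 1 := by nlinarith
    have hfactor : Q / 2 * (1 + Q * x ^ (-g)) ≤ Q * y ^ (-g) := by nlinarith
    nlinarith
  · have hle := mul_le_mul_of_nonneg_left (rpow_neg_mul_sub_le hg hx0 h hy1) hQ.le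
    have hpos : 0 ≤ y - x := by linarith
    rw [abs_sub_comm, abs_of_nonneg hpos]
    refine le_trans ?_ (le_trans hle (by rw [mul_sub]; exact le_abs_self _))
    have hfactor : Q / 2 * (1 + Q * x ^ (-g)) ≤ Q * x ^ (-g) := by nlinarith
    nlinarith

lemma curveNormSq_le_mul_one_sub_sq (hd0 : 0 < d) (hd1 : d ≤ 1) (hσ : σ ∈ Ioo 0 (π / 2))
    (hκ : κ * cos σ ^ d = sinRatio (2 - d) σ) (hQ : Q * cos σ ^ (-(2 - d)) = sinRatio d σ)
    (hs : s ∈ Ico 0 (π / 2)) :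
    curveNormSq d κ s ≤ (sin (d * σ) / sin ((2 - d) * σ)) ^ 2 *
      ((1 - (Q * sin (σ / 2) / 4 * (s - σ)) ^ 2) * curveNormSq (-(2 - d)) Q s) := by
  have hcosσ := cos_pos_of_mem_Ico (Ioo_subset_Ico_self hσ)
  have hcos := cos_pos_of_mem_Ico hs
  have hQ0 : 0 < Q := pos_of_mul_pos_left (hQ ▸ sinRatio_pos hd0 (by linarith) hσ)
    (rpow_pos_of_pos hcosσ _).le
  have hQ1 : Q * cos σ ^ (-(2 - d)) ≤ 1 := hQ ▸ (sinRatio_le_cos hd0 hd1 hσ).trans (cos_le_one σ)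
  have hgap := saddleGap_nonneg hd0 hd1 hσ hκ hQ hs
  rw [saddleGap, sub_nonneg, ← hQ] at hgap
  refine hgap.trans (mul_le_mul_of_nonneg_left ?_ (sq_nonneg _))
  have hsep : Q * sin (σ / 2) / 4 * |s - σ| * (1 + Q * cos s ^ (-(2 - d))) ≤
      |Q * cos s ^ (-(2 - d)) - Q * cos σ ^ (-(2 - d))| :=
    calc Q * sin (σ / 2) / 4 * |s - σ| * (1 + Q * cos s ^ (-(2 - d)))
        = Q / 2 * (1 + Q * cos s ^ (-(2 - d))) * (sin (σ / 2) / 2 * |s - σ|) := by ring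
      _ ≤ Q / 2 * (1 + Q * cos s ^ (-(2 - d))) * |cos s - cos σ| := by
        gcongr
        exact mul_abs_sub_le_abs_cos_sub_cos (Ico_subset_Icc_self hs) (Ioo_subset_Icc_self hσ)
      _ ≤ _ := half_mul_abs_sub_le_abs_rpow_neg_sub (by linarith) hcos (cos_le_one s) hcosσ
        (cos_le_one σ) hQ0 hQ1
  have hsin := (sin_pos_of_mem_Ioo_half
    (⟨half_pos hσ.1, by linarith [hσ.1, hσ.2]⟩ : σ / 2 ∈ Ioo 0 (π / 2))).le
  have hsq := pow_le_pow_left₀ (by positivity) hsep 2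
  rw [mul_pow, mul_pow, sq_abs, sq_abs, ← mul_pow] at hsq
  have hD := mul_le_mul_of_nonneg_left
    (curveNormSq_le (k := -(2 - d)) (A := Q) (s := s) (by positivity))
    (sq_nonneg (Q * sin (σ / 2) / 4 * (s - σ)))
  linarith

lemma norm_one_sub_mul_cpow_le (hd0 : 0 < d) (hd1 : d ≤ 1) (hσ : σ ∈ Ioo 0 (π / 2))
    (hV : 0 < V.re) (hκ : u * V.re ^ (-d) * cos σ ^ d = sinRatio (2 - d) σ)
    (hQ : V.re ^ (2 - d) * cos σ ^ (-(2 - d)) = sinRatio d σ) :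
    ‖1 - u * V ^ ((-d : ℝ) : ℂ)‖ ≤ sin (d * σ) / sin ((2 - d) * σ) *
      exp (-((V.re ^ (2 - d) * sin (σ / 2) / 4 * (|V.arg| - σ)) ^ 2 / 2)) *
        ‖1 - V ^ ((2 - d : ℝ) : ℂ)‖ := by
  have hr := (div_pos (sin_mul_pos hd0 (by linarith) hσ)
    (sin_mul_pos (by linarith : 0 < 2 - d) (by linarith) hσ)).le
  have harg := Complex.abs_arg_lt_pi_div_two_iff.2 (Or.inl hV)
  have h := curveNormSq_le_mul_one_sub_sq hd0 hd1 hσ hκ hQ ⟨abs_nonneg _, harg⟩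
  rw [curveNormSq_abs, curveNormSq_abs, ← norm_one_sub_mul_cpow_sq hV,
    ← norm_one_sub_cpow_sq hV] at h
  set X := (V.re ^ (2 - d) * sin (σ / 2) / 4 * (|V.arg| - σ)) ^ 2
  refine le_of_sq_le_sq ?_ (by positivity)
  calc _ ≤ _ := h
    _ ≤ (sin (d * σ) / sin ((2 - d) * σ)) ^ 2 *
        (exp (-X) * ‖1 - V ^ ((2 - d : ℝ) : ℂ)‖ ^ 2) := by
      gcongr
      exact one_sub_le_exp_neg X
    _ = _ := by
      rw [mul_pow, mul_pow, ← exp_nat_mul]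
      ring_nf

end Decay

section Gaussian

variable {c k σ : ℝ} {G : ℝ → ℝ}

lemma arg_verticalLine (hc : 0 < c) (τ : ℝ) : (verticalLine c τ).arg = arctan (τ / c) := by
  have harg := abs_lt.1 (Complex.abs_arg_lt_pi_div_two_iff.2
    (Or.inl (by simpa using hc) : 0 < (verticalLine c τ).re ∨ verticalLine c τ = 0))
  rw [← arctan_tan harg.1 harg.2, Complex.tan_arg, re_verticalLine, im_verticalLine]

lemma hasDerivAt_arctan_div (hc : 0 < c) (τ : ℝ) :
    HasDerivAt (fun t ↦ arctan (t / c)) (c / (c ^ 2 + τ ^ 2)) τ := by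
  refine ((hasDerivAt_id τ).div_const c).arctan.congr_deriv ?_
  simp only [id]
  field_simp

lemma injective_arctan_div (hc : 0 < c) : Function.Injective fun t ↦ arctan (t / c) :=
  arctan_injective.comp fun _ _ ↦ (div_left_inj' hc.ne').1

lemma integrable_mul_comp_arctan (hc : 0 < c) (hG : Integrable G) :
    Integrable fun τ ↦ c / (c ^ 2 + τ ^ 2) * G (arctan (τ / c)) := by
  have h := (integrableOn_image_iff_integrableOn_abs_deriv_smul MeasurableSet.univ
    (fun τ _ ↦ (hasDerivAt_arctan_div hc τ).hasDerivWithinAt) (injective_arctan_div hc).injOn G).1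
    hG.integrableOn
  refine (integrableOn_univ.1 h).congr (Eventually.of_forall fun τ ↦ ?_)
  simp only [smul_eq_mul]
  rw [abs_of_nonneg (by positivity)]

lemma integral_mul_comp_arctan_le (hc : 0 < c) (hG : Integrable G) (hG0 : 0 ≤ G) :
    ∫ τ, c / (c ^ 2 + τ ^ 2) * G (arctan (τ / c)) ≤ ∫ s, G s := by
  have h := integral_image_eq_integral_abs_deriv_smul MeasurableSet.univ
    (fun τ _ ↦ (hasDerivAt_arctan_div hc τ).hasDerivWithinAt) (injective_arctan_div hc).injOn G
  have habs (τ : ℝ) : |c / (c ^ 2 + τ ^ 2)| = c / (c ^ 2 + τ ^ 2) := abs_of_nonneg (by positivity)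
  simp only [habs, smul_eq_mul, setIntegral_univ] at h
  rw [← h]
  exact setIntegral_le_integral hG (Eventually.of_forall hG0)

lemma integrable_exp_neg_mul_sub_sq (hk : 0 < k) :
    Integrable fun s ↦ exp (-k * (s - σ) ^ 2) :=
  (integrable_exp_neg_mul_sq hk).comp_sub_right σ

lemma integrable_exp_neg_mul_abs_sub_sq (hk : 0 < k) :
    Integrable fun s ↦ exp (-k * (|s| - σ) ^ 2) := by
  refine ((integrable_exp_neg_mul_sq (half_pos hk)).const_mul (exp (k * σ ^ 2))).mono'
    (by fun_prop) (Eventually.of_forall fun s ↦ ?_)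
  rw [norm_of_nonneg (exp_pos _).le, ← exp_add]
  gcongr
  nlinarith [mul_nonneg hk.le (sq_nonneg (|s| - 2 * σ)), sq_abs s]

lemma integral_exp_neg_mul_abs_sub_sq_le (hk : 0 < k) :
    ∫ s, exp (-k * (|s| - σ) ^ 2) ≤ 2 * √(π / k) := by
  rw [integral_comp_abs (f := fun s ↦ exp (-k * (s - σ) ^ 2)), ← integral_gaussian k,
    ← integral_sub_right_eq_self (fun s : ℝ ↦ exp (-k * s ^ 2)) σ]
  exact mul_le_mul_of_nonneg_left (setIntegral_le_integral (integrable_exp_neg_mul_sub_sq hk)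
    (Eventually.of_forall fun s ↦ (exp_pos _).le)) zero_le_two

end Gaussian

section Laplace

variable {d κ b c u σ τ : ℝ}

lemma norm_verticalLine_rpow_le {e : ℝ} (hc : 0 < c) (he : 1 ≤ e) (τ : ℝ) :
    ‖verticalLine c τ‖ ^ (-e - 1) ≤ c ^ (-e) * (c / (c ^ 2 + τ ^ 2)) := by
  have hV := le_norm_verticalLine c τ
  calc ‖verticalLine c τ‖ ^ (-e - 1) = ‖verticalLine c τ‖ ^ (1 - e) / (c ^ 2 + τ ^ 2) := by
        rw [← norm_verticalLine_sq, ← rpow_natCast, ← rpow_sub (hc.trans_le hV)]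
        push_cast
        ring_nf
    _ ≤ c ^ (1 - e) / (c ^ 2 + τ ^ 2) := by
        exact div_le_div_of_nonneg_right (rpow_le_rpow_of_nonpos hc hV (by linarith))
          (by positivity)
    _ = c ^ (-e) * (c / (c ^ 2 + τ ^ 2)) := by
        rw [sub_eq_neg_add, rpow_add_one hc.ne']
        ring

lemma norm_cpowKernel_two_le {g : ℝ} (hg1 : 1 ≤ g) (hg2 : g ≤ 2) (hc : 0 < c) (hc1 : c < 1)
    (hκ : 0 < κ) (τ : ℝ) :
    ‖cpowKernel g (g - 1 - g * κ) 2 (verticalLine c τ)‖ ≤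
      (((1 - c ^ g) / 2) ^ 2)⁻¹ * (c ^ (-(g * (1 + κ))) * (c / (c ^ 2 + τ ^ 2))) := by
  have h := norm_cpowKernel_le (V := verticalLine c τ) (q := g - 1 - g * κ) (n := 2) hg1 hg2
    (by simpa) (by simpa)
  rw [re_verticalLine] at h
  refine h.trans ?_
  gcongr
  refine le_trans (le_of_eq ?_) (norm_verticalLine_rpow_le hc (by nlinarith : 1 ≤ g * (1 + κ)) τ)
  push_cast
  ring_nf

lemma norm_cpowKernel_mul_cpow {g q : ℝ} (hb : -1 < b) (m : ℕ) (V z : ℂ) :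
    ‖cpowKernel g q (m + 2) V * z ^ ((m + 1 + b : ℝ) : ℂ)‖ =
      ‖cpowKernel g q 2 V‖ * (‖z‖ / ‖1 - V ^ (g : ℂ)‖) ^ m * ‖z‖ ^ (1 + b) := by
  have hz : ‖z‖ ^ (m + 1 + b) = ‖z‖ ^ m * ‖z‖ ^ (1 + b) := by
    rw [add_assoc, rpow_add_of_nonneg (norm_nonneg z) m.cast_nonneg (by linarith), rpow_natCast]
  rw [norm_mul, Complex.norm_cpow_real, hz, cpowKernel, cpowKernel, pow_add]
  simp only [norm_mul, norm_inv, norm_pow]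
  ring

lemma exp_neg_natCast_mul_le {X : ℝ} (hX : X ≤ 1) (m : ℕ) :
    exp (-X) ^ m ≤ exp 1 * exp (-((m + 1) * X)) := by
  rw [← exp_nat_mul, ← exp_add]
  gcongr
  linarith

lemma sqrt_pi_div_mul_sq_div_two {μ N : ℝ} (hμ : 0 < μ) (hN : 0 < N) :
    √(π / (N * μ ^ 2 / 2)) = √(2 * π) / μ * N ^ (-(1 : ℝ) / 2) := by
  rw [neg_div, rpow_neg hN.le, ← sqrt_eq_rpow,
    show π / (N * μ ^ 2 / 2) = 2 * π / μ ^ 2 / N by field_simp, sqrt_div (by positivity),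
    sqrt_div (by positivity), sqrt_sq hμ.le, div_eq_mul_inv]

/-- The factor, uniform in `n`, of the Laplace-type bound for the integral representing a Jacobi
biorthogonal polynomial at a saddle point `σ` of the line `Re V = c`; here `κ = (a + 1) / α`. -/
noncomputable def laplaceConst (d κ b c σ : ℝ) : ℝ :=
  (2 - d) * (((1 - c ^ (2 - d)) / 2) ^ 2)⁻¹ * c ^ (-((2 - d) * (1 + κ))) * exp 1 * 2 ^ (1 + b) *
    (2 * (√(2 * π) / (c ^ (2 - d) * sin (σ / 2) / 4)))

lemma saddle_width_mem_Ioc (hd1 : d ≤ 1) (hc : 0 < c) (hc1 : c < 1) (hσ : σ ∈ Ioo 0 (π / 2)) :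
    c ^ (2 - d) * sin (σ / 2) / 4 ∈ Ioc 0 (1 / 4) := by
  have hsin := sin_pos_of_mem_Ioo_half
    (⟨half_pos hσ.1, by linarith [hσ.1, hσ.2]⟩ : σ / 2 ∈ Ioo 0 (π / 2))
  refine ⟨by positivity, ?_⟩
  gcongr
  exact mul_le_one₀ (rpow_le_one hc.le hc1.le (by linarith)) hsin.le (sin_le_one _)

variable (hd0 : 0 < d) (hd1 : d ≤ 1) (hc : 0 < c) (hc1 : c < 1) (hσ : σ ∈ Ioo 0 (π / 2))
  (hu : u * c ^ (-d) * cos σ ^ d = sinRatio (2 - d) σ)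
  (hcσ : c ^ (2 - d) * cos σ ^ (-(2 - d)) = sinRatio d σ)

include hd0 hd1 hc hσ hu in
lemma abs_le_rpow_of_eq_sinRatio : |u| ≤ c ^ d := by
  have hcd := rpow_pos_of_pos hc d
  have hu0 : 0 < u * c ^ (-d) := pos_of_mul_pos_left
    (hu ▸ sinRatio_pos (by linarith) (by linarith) hσ)
    (rpow_pos_of_pos (cos_pos_of_mem_Ico (Ioo_subset_Ico_self hσ)) _).le
  have hu1 := le_one_of_mul_cos_rpow_eq_sinRatio hd0 hd1 hσ hu
  rw [abs_of_pos (pos_of_mul_pos_left hu0 (rpow_pos_of_pos hc _).le)]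
  rwa [rpow_neg hc.le, ← div_eq_mul_inv, div_le_one hcd] at hu1

include hd0 hd1 hc hc1 hσ hu hcσ in
lemma norm_one_sub_div_pow_le (m : ℕ) (τ : ℝ) :
    (‖1 - u * verticalLine c τ ^ ((-d : ℝ) : ℂ)‖ /
        ‖1 - verticalLine c τ ^ ((2 - d : ℝ) : ℂ)‖) ^ m ≤
      (sin (d * σ) / sin ((2 - d) * σ)) ^ m * (exp 1 * exp (-((m + 1) *
        (c ^ (2 - d) * sin (σ / 2) / 4) ^ 2 / 2) * (|arctan (τ / c)| - σ) ^ 2)) := by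
  have hr := (div_pos (sin_mul_pos hd0 (by linarith) hσ)
    (sin_mul_pos (by linarith : 0 < 2 - d) (by linarith) hσ)).le
  have hdecay := norm_one_sub_mul_cpow_le (V := verticalLine c τ) hd0 hd1 hσ (by simpa)
    (by simpa using hu) (by simpa using hcσ)
  rw [re_verticalLine, arg_verticalLine hc] at hdecay
  have hμ := saddle_width_mem_Ioc hd1 hc hc1 hσ
  set μ := c ^ (2 - d) * sin (σ / 2) / 4
  have hgap : |(|arctan (τ / c)| - σ)| ≤ 2 := by
    have harctan := abs_lt.2 ⟨neg_pi_div_two_lt_arctan (τ / c), arctan_lt_pi_div_two (τ / c)⟩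
    rw [abs_le]
    constructor <;> linarith [abs_nonneg (arctan (τ / c)), hσ.1, hσ.2, pi_le_four]
  have hX : (μ * (|arctan (τ / c)| - σ)) ^ 2 / 2 ≤ 1 := by
    have habs : |μ * (|arctan (τ / c)| - σ)| ≤ 1 := by
      rw [abs_mul, abs_of_pos hμ.1]
      nlinarith [hμ.1, hμ.2]
    linarith [(sq_le_one_iff_abs_le_one _).2 habs]
  calc _ ≤ (sin (d * σ) / sin ((2 - d) * σ) *
        exp (-((μ * (|arctan (τ / c)| - σ)) ^ 2 / 2))) ^ m := by
        gcongr
        exact div_le_of_le_mul₀ (norm_nonneg _) (by positivity) hdecay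
    _ ≤ _ := by
        rw [mul_pow]
        gcongr
        refine (exp_neg_natCast_mul_le hX m).trans_eq ?_
        ring_nf

include hd0 hd1 hc hc1 hσ hu hcσ in
lemma norm_integrand_le (hκ : 0 < κ) (hb : -1 < b) (m : ℕ) (τ : ℝ) :
    ‖cpowKernel (2 - d) (2 - d - 1 - (2 - d) * κ) (m + 2) (verticalLine c τ) *
        (1 - u * verticalLine c τ ^ ((-d : ℝ) : ℂ)) ^ ((m + 1 + b : ℝ) : ℂ)‖ ≤
      (((1 - c ^ (2 - d)) / 2) ^ 2)⁻¹ * c ^ (-((2 - d) * (1 + κ))) * exp 1 * 2 ^ (1 + b) *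
        (sin (d * σ) / sin ((2 - d) * σ)) ^ m * (c / (c ^ 2 + τ ^ 2) * exp (-((m + 1) *
          (c ^ (2 - d) * sin (σ / 2) / 4) ^ 2 / 2) * (|arctan (τ / c)| - σ) ^ 2)) := by
  have htwo : ‖1 - u * verticalLine c τ ^ ((-d : ℝ) : ℂ)‖ ≤ 2 := by
    have hone := (norm_mul_cpow_neg_le (u := u) hc hd0.le (le_norm_verticalLine c τ)).trans
      ((div_le_one (rpow_pos_of_pos hc d)).2 (abs_le_rpow_of_eq_sinRatio hd0 hd1 hc hσ hu))
    refine (norm_sub_le _ _).trans ?_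
    rw [norm_one]
    linarith
  rw [norm_cpowKernel_mul_cpow hb]
  refine (mul_le_mul (mul_le_mul
    (norm_cpowKernel_two_le (by linarith) (by linarith) hc hc1 hκ τ)
    (norm_one_sub_div_pow_le hd0 hd1 hc hc1 hσ hu hcσ m τ) (by positivity) (by positivity))
    (rpow_le_rpow (norm_nonneg _) htwo (by linarith)) (by positivity) ?_).trans_eq (by ring)
  have hr := (div_pos (sin_mul_pos hd0 (by linarith) hσ)
    (sin_mul_pos (by linarith : 0 < 2 - d) (by linarith) hσ)).le
  positivity

include hd0 hd1 hc hc1 hσ hu hcσ in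
lemma mul_norm_integral_le_laplaceConst (hκ : 0 < κ) (hb : -1 < b) (m : ℕ) :
    (2 - d) * ‖∫ τ, cpowKernel (2 - d) (2 - d - 1 - (2 - d) * κ) (m + 2) (verticalLine c τ) *
        (1 - u * verticalLine c τ ^ ((-d : ℝ) : ℂ)) ^ ((m + 1 + b : ℝ) : ℂ)‖ ≤
      laplaceConst d κ b c σ * (m + 1 : ℝ) ^ (-(1 : ℝ) / 2) *
        (sin (d * σ) / sin ((2 - d) * σ)) ^ m := by
  have hd2 : 0 < 2 - d := by linarith
  have hr := (div_pos (sin_mul_pos hd0 (by linarith) hσ)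
    (sin_mul_pos hd2 (by linarith) hσ)).le
  have hμ := (saddle_width_mem_Ioc hd1 hc hc1 hσ).1
  have hk : 0 < (m + 1) * (c ^ (2 - d) * sin (σ / 2) / 4) ^ 2 / 2 := by positivity
  have hgauss := (integral_mul_comp_arctan_le hc (integrable_exp_neg_mul_abs_sub_sq hk)
    fun s ↦ (exp_pos _).le).trans (integral_exp_neg_mul_abs_sub_sq_le (σ := σ) hk)
  have hint := norm_integral_le_of_norm_le ((integrable_mul_comp_arctan hc
    (integrable_exp_neg_mul_abs_sub_sq (σ := σ) hk)).const_mul _)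
    (Eventually.of_forall (norm_integrand_le hd0 hd1 hc hc1 hσ hu hcσ hκ hb m))
  rw [integral_const_mul] at hint
  rw [sqrt_pi_div_mul_sq_div_two hμ (by positivity)] at hgauss
  rw [laplaceConst]
  refine (mul_le_mul_of_nonneg_left (hint.trans
    (mul_le_mul_of_nonneg_left hgauss (by positivity))) hd2.le).trans_eq (by ring)

include hd0 hd1 hc hc1 hσ hu hcσ in
lemma IsJacobiBiorthogonal.abs_eval_mul_le {α a : ℝ} {n : ℕ} {p : ℝ[X]}
    (hp : IsJacobiBiorthogonal α a b n p) (hα : 0 < α) (hαd : (2 - d) / α = d) (ha : -1 < a)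
    (hb : -1 < b) (hn : 1 ≤ n) :
    2 * π * (|p.eval u| * (1 - u) ^ b) ≤ laplaceConst d ((a + 1) / α) b c σ *
      (n : ℝ) ^ (-(1 : ℝ) / 2) * (sin (d * σ) / sin ((2 - d) * σ)) ^ (n - 1) := by
  obtain ⟨m, rfl⟩ := Nat.exists_eq_add_of_le' hn
  have hu0 := abs_le_rpow_of_eq_sinRatio hd0 hd1 hc hσ hu
  have hu1 : u < 1 := (le_abs_self u).trans_lt (hu0.trans_lt (rpow_lt_one hc.le hc1 hd0))
  have hpos : 0 ≤ 2 * π * (1 - u) ^ b := mul_nonneg (by positivity) (rpow_nonneg (by linarith) _)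
  have hrep := hp.two_pi_mul_eval (g := 2 - d) hα ha hb hn (by linarith) (by linarith) hc hc1
    (by rwa [hαd])
  rw [hαd] at hrep
  have hint := mul_norm_integral_le_laplaceConst hd0 hd1 hc hc1 hσ hu hcσ
    (div_pos (by linarith : 0 < a + 1) hα) hb m
  rw [Nat.cast_add_one] at hrep ⊢
  calc 2 * π * (|p.eval u| * (1 - u) ^ b) = |2 * π * (p.eval u * (1 - u) ^ b)| := by
        rw [mul_left_comm, mul_left_comm (2 * π), abs_mul, abs_of_nonneg hpos]
    _ ≤ _ := by
        rw [hrep, abs_mul, abs_of_nonneg (by linarith)]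
        exact (mul_le_mul_of_nonneg_left (Complex.abs_re_le_norm _) (by linarith)).trans hint

end Laplace

section Uniform

variable {d σ : ℝ}

/-- The abscissa `c` of the vertical line through the saddle point of argument `σ`. -/
noncomputable def saddleRe (d σ : ℝ) : ℝ := sinRatio d σ ^ (1 / (2 - d)) * cos σ

/-- The point `u = (1 - x) / 2` of `(0, 1)` whose saddle point has argument `σ`. -/
noncomputable def saddleValue (d σ : ℝ) : ℝ := sinRatio (2 - d) σ * sinRatio d σ ^ (d / (2 - d))

lemma saddleRe_rpow_mul_cos_rpow (hd0 : 0 < d) (hd2 : d < 2) (hσ : σ ∈ Ioo 0 (π / 2)) :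
    saddleRe d σ ^ (2 - d) * cos σ ^ (-(2 - d)) = sinRatio d σ := by
  have hcos := cos_pos_of_mem_Ico (Ioo_subset_Ico_self hσ)
  have hρ := sinRatio_pos hd0 hd2.le hσ
  rw [saddleRe, mul_rpow (by positivity) hcos.le, ← rpow_mul hρ.le, one_div,
    inv_mul_cancel₀ (by linarith), rpow_one, mul_assoc, ← rpow_add hcos, add_neg_cancel, rpow_zero,
    mul_one]

lemma saddleValue_mul_rpow_mul_cos_rpow (hd0 : 0 < d) (hd2 : d < 2) (hσ : σ ∈ Ioo 0 (π / 2)) :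
    saddleValue d σ * saddleRe d σ ^ (-d) * cos σ ^ d = sinRatio (2 - d) σ := by
  have hcos := cos_pos_of_mem_Ico (Ioo_subset_Ico_self hσ)
  have hρ := sinRatio_pos hd0 hd2.le hσ
  have hexp : 1 / (2 - d) * -d = -(d / (2 - d)) := by ring
  rw [saddleRe, saddleValue, mul_rpow (by positivity) hcos.le, ← rpow_mul hρ.le, hexp,
    rpow_neg hρ.le, rpow_neg hcos.le]
  field_simp

lemma saddleRe_mem_Ioo (hd0 : 0 < d) (hd1 : d ≤ 1) (hσ : σ ∈ Ioo 0 (π / 2)) :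
    saddleRe d σ ∈ Ioo 0 1 := by
  have hcos := cos_pos_of_mem_Ico (Ioo_subset_Ico_self hσ)
  have hcos1 : cos σ < 1 := by
    simpa using cos_lt_cos_of_nonneg_of_le_pi le_rfl (by linarith [hσ.2, pi_pos]) hσ.1
  have hρ := sinRatio_pos hd0 (by linarith) hσ
  exact ⟨by unfold saddleRe; positivity, mul_lt_one_of_nonneg_of_lt_one_right
    (rpow_le_one hρ.le ((sinRatio_le_cos hd0 hd1 hσ).trans hcos1.le)
      (one_div_nonneg.2 (by linarith))) hcos.le hcos1⟩

lemma continuousOn_sinRatio (hd0 : 0 < d) (hd2 : d ≤ 2) :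
    ContinuousOn (sinRatio d) (Ioo 0 (π / 2)) := by
  unfold sinRatio
  exact ContinuousOn.div (by fun_prop) (by fun_prop) fun σ hσ ↦ (sin_mul_pos hd0 hd2 hσ).ne'

lemma continuousOn_saddleRe (hd0 : 0 < d) (hd2 : d < 2) :
    ContinuousOn (saddleRe d) (Ioo 0 (π / 2)) :=
  ((continuousOn_sinRatio hd0 hd2.le).rpow_const fun _ hσ ↦
    Or.inl (sinRatio_pos hd0 hd2.le hσ).ne').mul continuous_cos.continuousOn

lemma continuousOn_saddleValue (hd0 : 0 < d) (hd2 : d < 2) :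
    ContinuousOn (saddleValue d) (Ioo 0 (π / 2)) :=
  (continuousOn_sinRatio (by linarith) (by linarith)).mul
    ((continuousOn_sinRatio hd0 hd2.le).rpow_const fun σ hσ ↦
      Or.inl (sinRatio_pos hd0 hd2.le hσ).ne')

lemma saddleValue_lt_one (hd0 : 0 < d) (hd1 : d ≤ 1) (hσ : σ ∈ Ioo 0 (π / 2)) :
    saddleValue d σ < 1 := by
  have hc := saddleRe_mem_Ioo hd0 hd1 hσ
  exact (le_abs_self _).trans_lt ((abs_le_rpow_of_eq_sinRatio hd0 hd1 hc.1 hσ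
    (saddleValue_mul_rpow_mul_cos_rpow hd0 (by linarith) hσ)).trans_lt
      (rpow_lt_one hc.1.le hc.2 hd0))

lemma continuousOn_laplaceConst (hd0 : 0 < d) (hd1 : d ≤ 1) (κ b : ℝ) :
    ContinuousOn (fun σ ↦ laplaceConst d κ b (saddleRe d σ) σ) (Ioo 0 (π / 2)) := by
  have hc := continuousOn_saddleRe hd0 (by linarith)
  have hc0 (σ : ℝ) (hσ : σ ∈ Ioo 0 (π / 2)) := saddleRe_mem_Ioo hd0 hd1 hσ
  have hpow (q : ℝ) : ContinuousOn (fun σ ↦ saddleRe d σ ^ q) (Ioo 0 (π / 2)) :=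
    hc.rpow_const fun σ hσ ↦ Or.inl (hc0 σ hσ).1.ne'
  have hgap : ContinuousOn (fun σ ↦ (((1 - saddleRe d σ ^ (2 - d)) / 2) ^ 2)⁻¹) (Ioo 0 (π / 2)) :=
    (((continuousOn_const.sub (hpow _)).div_const 2).pow 2).inv₀ fun σ hσ ↦ by
      have := rpow_lt_one (hc0 σ hσ).1.le (hc0 σ hσ).2 (by linarith : 0 < 2 - d)
      exact pow_ne_zero 2 (half_pos (sub_pos.2 this)).ne'
  have hwidth : ContinuousOn (fun σ ↦ √(2 * π) / (saddleRe d σ ^ (2 - d) * sin (σ / 2) / 4))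
      (Ioo 0 (π / 2)) :=
    continuousOn_const.div (((hpow _).mul (by fun_prop)).div_const 4) fun σ hσ ↦
      (saddle_width_mem_Ioc hd1 (hc0 σ hσ).1 (hc0 σ hσ).2 hσ).1.ne'
  unfold laplaceConst
  exact ((((continuousOn_const.mul hgap).mul (hpow _)).mul continuousOn_const).mul
    continuousOn_const).mul (continuousOn_const.mul hwidth)

variable {α a b δ : ℝ}

lemma IsJacobiBiorthogonal.abs_eval_saddleValue_le {n : ℕ} {p : ℝ[X]}
    (hp : IsJacobiBiorthogonal α a b n p) (hα : 0 < α) (hd0 : 0 < d) (hd1 : d ≤ 1)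
    (hαd : (2 - d) / α = d) (ha : -1 < a) (hb : -1 < b) (hn : 1 ≤ n) (hσ : σ ∈ Ioo 0 (π / 2)) :
    |p.eval (saddleValue d σ)| ≤ laplaceConst d ((a + 1) / α) b (saddleRe d σ) σ /
      (2 * π * (1 - saddleValue d σ) ^ b * (sin (d * σ) / sin ((2 - d) * σ))) *
        (n : ℝ) ^ (-(1 : ℝ) / 2) * (sin (d * σ) / sin ((2 - d) * σ)) ^ n := by
  have hc := saddleRe_mem_Ioo hd0 hd1 hσ
  have hr := div_pos (sin_mul_pos hd0 (by linarith) hσ)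
    (sin_mul_pos (by linarith : 0 < 2 - d) (by linarith) hσ)
  have hub := rpow_pos_of_pos (sub_pos.2 (saddleValue_lt_one hd0 hd1 hσ)) b
  have h := hp.abs_eval_mul_le hd0 hd1 hc.1 hc.2 hσ
    (saddleValue_mul_rpow_mul_cos_rpow hd0 (by linarith) hσ)
    (saddleRe_rpow_mul_cos_rpow hd0 (by linarith) hσ) hα hαd ha hb hn
  set r := sin (d * σ) / sin ((2 - d) * σ)
  rw [div_mul_eq_mul_div, div_mul_eq_mul_div, le_div_iff₀ (by positivity)]
  calc _ = 2 * π * (|p.eval (saddleValue d σ)| * (1 - saddleValue d σ) ^ b) * r := by ring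
    _ ≤ _ := mul_le_mul_of_nonneg_right h hr.le
    _ = _ := by rw [mul_assoc _ (r ^ (n - 1)), pow_sub_one_mul (by omega)]

lemma exists_forall_abs_eval_saddleValue_le (hα : 0 < α) (hd0 : 0 < d) (hd1 : d ≤ 1)
    (hαd : (2 - d) / α = d) (ha : -1 < a) (hb : -1 < b) (hδ : 0 < δ) :
    ∃ C > 0, ∀ n : ℕ, 1 ≤ n → ∀ p : ℝ[X], IsJacobiBiorthogonal α a b n p →
      ∀ σ ∈ Icc δ (π / 2 - δ), |p.eval (saddleValue d σ)| ≤
        C * (n : ℝ) ^ (-(1 : ℝ) / 2) * (sin (d * σ) / sin ((2 - d) * σ)) ^ n := by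
  have hsub : Icc δ (π / 2 - δ) ⊆ Ioo 0 (π / 2) := Icc_subset_Ioo hδ (by linarith)
  have hd2 : 0 < 2 - d := by linarith
  have hsin {k σ : ℝ} := sin_mul_pos (k := k) (s := σ)
  have hcont : ContinuousOn (fun σ ↦ laplaceConst d ((a + 1) / α) b (saddleRe d σ) σ /
      (2 * π * (1 - saddleValue d σ) ^ b * (sin (d * σ) / sin ((2 - d) * σ))))
      (Ioo 0 (π / 2)) := by
    refine (continuousOn_laplaceConst hd0 hd1 _ _).div ((continuousOn_const.mul
      ((continuousOn_const.sub (continuousOn_saddleValue hd0 (by linarith))).rpow_const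
        fun σ hσ ↦ Or.inl (sub_pos.2 (saddleValue_lt_one hd0 hd1 hσ)).ne')).mul
      (ContinuousOn.div (by fun_prop) (by fun_prop) fun σ hσ ↦
        (hsin hd2 (by linarith) hσ).ne')) fun σ hσ ↦ ?_
    have hub := rpow_pos_of_pos (sub_pos.2 (saddleValue_lt_one hd0 hd1 hσ)) b
    have hr := div_pos (hsin hd0 (by linarith) hσ) (hsin hd2 (by linarith) hσ)
    positivity
  obtain ⟨C, hC⟩ := isCompact_Icc.exists_bound_of_continuousOn (hcont.mono hsub)
  refine ⟨max C 1, by positivity, fun n hn p hp σ hσ ↦ ?_⟩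
  have hr := div_pos (hsin hd0 (by linarith) (hsub hσ)) (hsin hd2 (by linarith) (hsub hσ))
  refine (hp.abs_eval_saddleValue_le hα hd0 hd1 hαd ha hb hn (hsub hσ)).trans ?_
  gcongr
  exact (le_abs_self _).trans ((hC σ hσ).trans (le_max_left _ _))

end Uniform

section Angles

variable {α θ : ℝ}

lemma pi_sub_div_one_add (hα : 0 < α) : (π - θ) / (1 + α) = 2 / (1 + α) * ((π - θ) / 2) := by
  field_simp

lemma pi_sub_div_one_add_one_div (hα : 0 < α) :
    (π - θ) / (1 + 1 / α) = (2 - 2 / (1 + α)) * ((π - θ) / 2) := by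
  field_simp
  ring

lemma Th_eq_sinRatio (hα : 0 < α) : Th α θ = sinRatio (2 / (1 + α)) ((π - θ) / 2) := by
  have hsin : sin θ = 2 * sin ((π - θ) / 2) * cos ((π - θ) / 2) := by
    rw [← sin_two_mul, ← sin_pi_sub]
    ring_nf
  rw [Th, sinRatio, ← pi_sub_div_one_add hα, hsin, ← div_div]
  ring

lemma xval_eq (hα : 0 < α) : xval α θ = 1 - 2 * saddleValue (2 / (1 + α)) ((π - θ) / 2) := by
  have hinv : 2 / (1 + 1 / α) = 2 - 2 / (1 + α) := by
    field_simp
    ring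
  have hexp : 2 / (1 + α) / (2 - 2 / (1 + α)) = 1 / α := by
    rw [← hinv]
    field_simp
    ring
  rw [xval, saddleValue, Th_eq_sinRatio hα, Th_eq_sinRatio (by positivity), hinv, hexp]
  ring

end Angles

theorem stmt1 (α a b ε : ℝ) (hα : 1 ≤ α) (ha : -1 < a) (hb : -1 < b)
    (hε : ε ∈ Set.Ioo 0 (Real.pi / 2))
    (P : ℕ → Polynomial ℝ)
    (hdeg : ∀ n, (P n).natDegree = n)
    (horth : ∀ n, ∀ j < n,
      ∫ x in Set.Ioo (-1:ℝ) 1,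
        (P n).eval x * (1 - x) ^ (α * (j:ℝ)) * (1 - x) ^ a * (1 + x) ^ b = 0)
    (hnonzero : ∀ n,
      (∫ x in Set.Ioo (-1:ℝ) 1,
        (P n).eval x * (1 - x) ^ (α * (n:ℝ)) * (1 - x) ^ a * (1 + x) ^ b) ≠ 0)
    (hnorm : ∀ n : ℕ, (P n).eval 1 =
      Real.Gamma (n + (a+1)/α) / (Real.Gamma (n+1) * Real.Gamma ((a+1)/α))) :
    ∃ C > 0, ∀ n : ℕ, 1 ≤ n → ∀ θ ∈ Set.Icc ε (Real.pi - ε),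
      |(P n).eval (xval α θ)| ≤
        C * (n:ℝ) ^ (-(1:ℝ)/2) *
          (Real.sin ((Real.pi - θ) / (1 + α)) / Real.sin ((Real.pi - θ) / (1 + 1/α)))^n := by
  have hα0 : 0 < α := by linarith
  have hd1 : 2 / (1 + α) ≤ 1 := (div_le_one (by linarith)).2 (by linarith)
  have hαd : (2 - 2 / (1 + α)) / α = 2 / (1 + α) := by
    field_simp
    ring
  obtain ⟨C, hC, hbound⟩ := exists_forall_abs_eval_saddleValue_le hα0 (by positivity) hd1 hαd ha hb
    (half_pos hε.1)
  refine ⟨C, hC, fun n hn θ hθ ↦ ?_⟩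
  have hp := isJacobiBiorthogonal_comp hα0 ha (hdeg n) (horth n) (hnorm n)
  have hσ : (π - θ) / 2 ∈ Icc (ε / 2) (π / 2 - ε / 2) :=
    ⟨by linarith [hθ.2], by linarith [hθ.1]⟩
  rw [pi_sub_div_one_add hα0, pi_sub_div_one_add_one_div hα0, xval_eq hα0]
  simpa using hbound n hn _ hp _ hσ
end

section
/- For any fixed real α > 0, the function x(θ) := 1 − 2·Θ_{1/α}(θ)·Θ_α(θ)^{1/α} is strictly decreasing on the interval (0, π), and moreover x(θ) → 1 as θ → 0⁺ and x(θ) → −1 as θ → π⁻. -/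
open Real Filter Set Topology

/-! In the variable `u = π - t` one has `Θ_c(t) = sinc u / sinc (a * u)` with `a = 1 / (1 + c)`,
so `Θ_c` extends continuously to `[0, π]` with values `0` at `t = 0` and `1` at `t = π`.
For `0 < a < 1` the logarithmic derivative of this ratio in `u` is
`(u * cot u - (a * u) * cot (a * u)) / u`, which is negative because `v ↦ v * cot v` is strictly
decreasing on `(0, π)`. Hence every `Θ_c` with `c > 0` increases strictly from `0` to `1`, and so
does a product of `Θ_c` with a nonnegative power of another such function. -/

theorem hasDerivAt_cot {x : ℝ} (hx : sin x ≠ 0) : HasDerivAt cot (-1 / sin x ^ 2) x := by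
  have hcot : cot = fun y ↦ cos y / sin y := funext cot_eq_cos_div_sin
  rw [hcot]
  refine ((hasDerivAt_cos x).fun_div (hasDerivAt_sin x) hx).congr_deriv ?_
  congr 1
  linear_combination -sin_sq_add_cos_sq x

theorem strictAntiOn_mul_cot : StrictAntiOn (fun u ↦ u * cot u) (Ioo 0 π) := by
  have hderiv (u : ℝ) (hu : u ∈ Ioo 0 π) :
      HasDerivAt (fun v ↦ v * cot v) ((sin u * cos u - u) / sin u ^ 2) u := by
    have hsin : sin u ≠ 0 := (sin_pos_of_mem_Ioo hu).ne'
    refine ((hasDerivAt_id' u).fun_mul (hasDerivAt_cot hsin)).congr_deriv ?_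
    rw [cot_eq_cos_div_sin]
    field_simp
    ring
  refine strictAntiOn_of_hasDerivWithinAt_neg (convex_Ioo 0 π)
    (fun u hu ↦ (hderiv u hu).continuousAt.continuousWithinAt)
    (fun u hu ↦ (hderiv u (interior_subset hu)).hasDerivWithinAt) fun u hu ↦ ?_
  rw [interior_Ioo] at hu
  have hsin : 0 < sin u := sin_pos_of_mem_Ioo hu
  have hlt : sin (2 * u) < 2 * u := sin_lt (by linarith [hu.1])
  rw [sin_two_mul] at hlt
  exact div_neg_of_neg_of_pos (by linarith) (by positivity)

theorem sinc_pos_of_abs_lt_pi {x : ℝ} (hx : |x| < π) : 0 < sinc x := by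
  have hpos {y : ℝ} (hy₀ : 0 < y) (hy : y < π) : 0 < sinc y := by
    rw [sinc_of_ne_zero hy₀.ne']
    exact div_pos (sin_pos_of_pos_of_lt_pi hy₀ hy) hy₀
  obtain ⟨hneg, hlt⟩ := abs_lt.1 hx
  rcases lt_trichotomy x 0 with h | rfl | h
  · rw [← sinc_neg]
    exact hpos (neg_pos.2 h) (neg_lt.1 hneg)
  · simp
  · exact hpos h hlt

/-- The ratio `sinc u / sinc (a * u)`, which is `Θ_c(π - u)` for `a = 1 / (1 + c)`, extended
continuously to `u = 0`. -/
noncomputable def sincRatio (a u : ℝ) : ℝ := sinc u / sinc (a * u)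

@[simp]
theorem sincRatio_zero (a : ℝ) : sincRatio a 0 = 1 := by simp [sincRatio]

@[simp]
theorem sincRatio_pi (a : ℝ) : sincRatio a π = 0 := by
  simp [sincRatio, sinc_of_ne_zero pi_ne_zero]

section sincRatio

variable {a u : ℝ}

theorem sincRatio_pos (hu : |u| < π) (hau : |a * u| < π) : 0 < sincRatio a u :=
  div_pos (sinc_pos_of_abs_lt_pi hu) (sinc_pos_of_abs_lt_pi hau)

theorem continuousAt_sincRatio (hau : |a * u| < π) : ContinuousAt (sincRatio a) u :=
  ContinuousAt.div (by fun_prop) (by fun_prop) (sinc_pos_of_abs_lt_pi hau).ne'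

theorem sincRatio_eq_mul_sin_div_sin (ha : a ≠ 0) (hu : u ≠ 0) :
    sincRatio a u = a * sin u / sin (a * u) := by
  rw [sincRatio, sinc_of_ne_zero hu, sinc_of_ne_zero (mul_ne_zero ha hu)]
  field_simp

theorem abs_mul_lt_pi (ha : |a| < 1) (hu : |u| ≤ π) : |a * u| < π := by
  rw [abs_mul]
  nlinarith [pi_pos, abs_nonneg a]

theorem mul_mem_Ioo_zero_pi (ha : a ∈ Ioo 0 1) (hu : u ∈ Ioo 0 π) : a * u ∈ Ioo 0 π :=
  ⟨mul_pos ha.1 hu.1, (mul_lt_of_lt_one_left hu.1 ha.2).trans hu.2⟩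

theorem cos_mul_sin_mul_lt (ha : a ∈ Ioo 0 1) (hu : u ∈ Ioo 0 π) :
    cos u * sin (a * u) < a * sin u * cos (a * u) := by
  have hau := mul_mem_Ioo_zero_pi ha hu
  have hcot : u * cot u < a * u * cot (a * u) :=
    strictAntiOn_mul_cot hau hu (mul_lt_of_lt_one_left hu.1 ha.2)
  rw [cot_eq_cos_div_sin, cot_eq_cos_div_sin, ← mul_div_assoc, ← mul_div_assoc,
    div_lt_div_iff₀ (sin_pos_of_mem_Ioo hu) (sin_pos_of_mem_Ioo hau)] at hcot
  refine lt_of_mul_lt_mul_left ?_ hu.1.le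
  linarith

theorem hasDerivAt_sincRatio (ha : a ≠ 0) (hu : u ≠ 0) (hsin : sin (a * u) ≠ 0) :
    HasDerivAt (sincRatio a)
      (a * (cos u * sin (a * u) - a * sin u * cos (a * u)) / sin (a * u) ^ 2) u := by
  have hden : HasDerivAt (fun v ↦ sin (a * v)) (cos (a * u) * a) u := by
    simpa using ((hasDerivAt_id u).const_mul a).sin
  have heq : sincRatio a =ᶠ[𝓝 u] fun v ↦ a * sin v / sin (a * v) := by
    filter_upwards [eventually_ne_nhds hu] with v hv using sincRatio_eq_mul_sin_div_sin ha hv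
  refine ((((hasDerivAt_sin u).const_mul a).div hden hsin).congr_of_eventuallyEq heq).congr_deriv ?_
  ring

theorem strictAntiOn_sincRatio (ha : a ∈ Ioo 0 1) : StrictAntiOn (sincRatio a) (Icc 0 π) := by
  have ha_abs : |a| < 1 := by rw [abs_of_pos ha.1]; exact ha.2
  have hsin {u : ℝ} (hu : u ∈ Ioo 0 π) : 0 < sin (a * u) :=
    sin_pos_of_mem_Ioo (mul_mem_Ioo_zero_pi ha hu)
  refine strictAntiOn_of_deriv_neg (convex_Icc 0 π) (fun u hu ↦ ?_) fun u hu ↦ ?_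
  · have hu_abs : |u| ≤ π := by rw [abs_of_nonneg hu.1]; exact hu.2
    exact (continuousAt_sincRatio (abs_mul_lt_pi ha_abs hu_abs)).continuousWithinAt
  · rw [interior_Icc] at hu
    rw [(hasDerivAt_sincRatio ha.1.ne' hu.1.ne' (hsin hu).ne').deriv]
    exact div_neg_of_neg_of_pos
      (mul_neg_of_pos_of_neg ha.1 (sub_neg.2 (cos_mul_sin_mul_lt ha hu))) (pow_pos (hsin hu) 2)

end sincRatio

theorem Th_eq_sincRatio {c t : ℝ} (hc : 1 + c ≠ 0) (ht : t ≠ π) :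
    Th c t = sincRatio (1 + c)⁻¹ (π - t) := by
  rw [sincRatio_eq_mul_sin_div_sin (inv_ne_zero hc) (sub_ne_zero.2 ht.symm), Th, sin_pi_sub,
    div_eq_inv_mul (π - t)]
  field_simp

section Th

variable {c t : ℝ}

theorem inv_one_add_mem_Ioo (hc : 0 < c) : (1 + c)⁻¹ ∈ Ioo (0 : ℝ) 1 :=
  ⟨by positivity, inv_lt_one_of_one_lt₀ (by linarith)⟩

theorem abs_inv_one_add_mul_lt_pi (hc : 0 < c) (ht : |t| ≤ π) : |(1 + c)⁻¹ * t| < π := by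
  obtain ⟨hpos, hlt⟩ := inv_one_add_mem_Ioo hc
  exact abs_mul_lt_pi (by rwa [abs_of_pos hpos]) ht

theorem Th_pos (hc : 0 < c) (ht : t ∈ Ioo 0 π) : 0 < Th c t := by
  have habs : |π - t| < π := abs_lt.2 ⟨by linarith [ht.2, pi_pos], by linarith [ht.1]⟩
  rw [Th_eq_sincRatio (by positivity) ht.2.ne]
  exact sincRatio_pos habs (abs_inv_one_add_mul_lt_pi hc habs.le)

theorem strictMonoOn_Th (hc : 0 < c) : StrictMonoOn (Th c) (Ico 0 π) := by
  intro s hs t ht hst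
  have hreflect {x : ℝ} (hx : x ∈ Ico 0 π) : π - x ∈ Icc 0 π :=
    ⟨by linarith [hx.2], by linarith [hx.1]⟩
  rw [Th_eq_sincRatio (by positivity) hs.2.ne, Th_eq_sincRatio (by positivity) ht.2.ne]
  exact strictAntiOn_sincRatio (inv_one_add_mem_Ioo hc) (hreflect ht) (hreflect hs)
    (sub_lt_sub_left hst π)

theorem tendsto_Th (hc : 0 < c) (ht : t ∈ Icc 0 π) :
    Tendsto (Th c) (𝓝[Ioo 0 π] t) (𝓝 (sincRatio (1 + c)⁻¹ (π - t))) := by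
  have habs : |π - t| ≤ π := abs_le.2 ⟨by linarith [ht.2, pi_pos], by linarith [ht.1]⟩
  have hcont : ContinuousAt (fun s ↦ sincRatio (1 + c)⁻¹ (π - s)) t :=
    (continuousAt_sincRatio (abs_inv_one_add_mul_lt_pi hc habs)).comp' (by fun_prop)
  refine (hcont.tendsto.mono_left nhdsWithin_le_nhds).congr' ?_
  filter_upwards [self_mem_nhdsWithin] with s hs
  exact (Th_eq_sincRatio (by positivity) hs.2.ne).symm

theorem tendsto_Th_zero (hc : 0 < c) : Tendsto (Th c) (𝓝[>] 0) (𝓝 0) := by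
  simpa [nhdsWithin_Ioo_eq_nhdsGT pi_pos] using tendsto_Th hc (left_mem_Icc.2 pi_pos.le)

theorem tendsto_Th_pi (hc : 0 < c) : Tendsto (Th c) (𝓝[<] π) (𝓝 1) := by
  simpa [nhdsWithin_Ioo_eq_nhdsLT pi_pos] using tendsto_Th hc (right_mem_Icc.2 pi_pos.le)

end Th

theorem stmt2_general {c d p : ℝ} (hc : 0 < c) (hd : 0 < d) (hp : 0 ≤ p) :
    StrictAntiOn (fun θ ↦ 1 - 2 * Th c θ * Th d θ ^ p) (Ioo 0 π) ∧
    Tendsto (fun θ ↦ 1 - 2 * Th c θ * Th d θ ^ p) (𝓝[>] 0) (𝓝 1) ∧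
    Tendsto (fun θ ↦ 1 - 2 * Th c θ * Th d θ ^ p) (𝓝[<] π) (𝓝 (-1)) := by
  have hlim {l : Filter ℝ} {x y : ℝ} (hx : Tendsto (Th c) l (𝓝 x)) (hy : Tendsto (Th d) l (𝓝 y)) :
      Tendsto (fun θ ↦ 1 - 2 * Th c θ * Th d θ ^ p) l (𝓝 (1 - 2 * x * y ^ p)) :=
    ((hx.const_mul 2).mul (hy.rpow_const (Or.inr hp))).const_sub 1
  refine ⟨fun s hs t ht hst ↦ ?_, ?_, ?_⟩
  · have hTc : Th c s < Th c t :=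
      (strictMonoOn_Th hc).mono Ioo_subset_Ico_self hs ht hst
    have hTd : Th d s ≤ Th d t :=
      (strictMonoOn_Th hd).monotoneOn.mono Ioo_subset_Ico_self hs ht hst.le
    have hprod : Th c s * Th d s ^ p < Th c t * Th d t ^ p :=
      mul_lt_mul hTc (rpow_le_rpow (Th_pos hd hs).le hTd hp) (rpow_pos_of_pos (Th_pos hd hs) p)
        (Th_pos hc ht).le
    linarith
  · simpa using hlim (tendsto_Th_zero hc) (tendsto_Th_zero hd)
  · convert hlim (tendsto_Th_pi hc) (tendsto_Th_pi hd) using 2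
    norm_num

theorem stmt2 (α : ℝ) (hα : 0 < α) :
    StrictAntiOn (xval α) (Set.Ioo 0 Real.pi) ∧
    Tendsto (xval α) (𝓝[>] (0:ℝ)) (𝓝 1) ∧
    Tendsto (xval α) (𝓝[<] Real.pi) (𝓝 (-1)) :=
  stmt2_general (one_div_pos.2 hα) hα (one_div_pos.2 hα).le
end

section
/- Let a > −1 be a real number and let n, r be natural numbers with 0 ≤ r ≤ n. Then ∑_{s=0}^{r} (−1)^s · Γ(n+s+a+1) / (Γ(n+1)·Γ(s+1)·Γ(r−s+1)·Γ(s+a+1)) = (−1)^r · Γ(n+a+1) / (Γ(n−r+1)·Γ(r+a+1)·Γ(r+1)), where Γ denotes the real Gamma function. -/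
open Real Finset

/-!
Up to the factor `(-1) ^ r / (Γ(n + 1) * r!)`, the sum is the `r`-th forward difference of
`z ↦ Γ(n + z) / Γ(z)` at `z = a + 1`. The functional equation of `Γ` shows that each difference
shifts the denominator by one and produces one linear factor, so the `r`-th difference is
`n (n - 1) ⋯ (n - r + 1) * Γ(n + z) / Γ(z + r)`.
-/

open scoped fwdDiff

lemma sum_neg_one_pow_mul_choose_mul_eq_fwdDiff_iter {M R : Type*} [AddCommMonoid M] [CommRing R]
    (f : M → R) (h y : M) (r : ℕ) :
    ∑ s ∈ range (r + 1), (-1) ^ s * (r.choose s : R) * f (y + s • h) =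
      (-1) ^ r * (Δ_[h])^[r] f y := by
  rw [fwdDiff_iter_eq_sum_shift, mul_sum]
  refine sum_congr rfl fun s hs ↦ ?_
  have sign : (-1 : R) ^ s = (-1) ^ r * (-1) ^ (r - s) := by
    rw [← pow_sub_mul_pow (-1 : R) (mem_range_succ_iff.mp hs), mul_right_comm, ← mul_pow]
    simp
  rw [sign, zsmul_eq_mul]
  push_cast
  ring

lemma descPochhammer_eval_mul_inv_Gamma_add_one (ν : ℂ) (r : ℕ) :
    (descPochhammer ℂ r).eval ν * (Complex.Gamma (ν + 1))⁻¹ = (Complex.Gamma (ν - r + 1))⁻¹ := by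
  induction r with
  | zero => simp
  | succ r ih =>
    rw [descPochhammer_succ_eval, mul_right_comm, ih, mul_comm,
      ← Complex.one_div_Gamma_eq_self_mul_one_div_Gamma_add_one]
    congr 2
    push_cast
    ring

lemma Gamma_add_one_div_Gamma_add_one_sub_Gamma_div_Gamma {s : ℂ} (hs : s ≠ 0) (t : ℂ) :
    Complex.Gamma (s + 1) / Complex.Gamma (t + 1) - Complex.Gamma s / Complex.Gamma t =
      (s - t) * (Complex.Gamma s / Complex.Gamma (t + 1)) := by
  rw [Complex.Gamma_add_one s hs, div_eq_mul_inv (Complex.Gamma s) (Complex.Gamma t),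
    Complex.one_div_Gamma_eq_self_mul_one_div_Gamma_add_one t]
  ring

lemma fwdDiff_iter_Gamma_add_div_Gamma (ν : ℂ) (r : ℕ) {z : ℂ} (hz : ∀ k : ℕ, ν + z ≠ -k) :
    (Δ_[1])^[r] (fun w ↦ Complex.Gamma (ν + w) / Complex.Gamma w) z =
      (descPochhammer ℂ r).eval ν * (Complex.Gamma (ν + z) / Complex.Gamma (z + r)) := by
  induction r generalizing z with
  | zero => simp
  | succ r ih =>
    have hz_succ (k : ℕ) : ν + (z + 1) ≠ -k := fun h ↦
      hz (k + 1) (by push_cast; linear_combination h)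
    have hz_ne : ν + z ≠ 0 := by simpa using hz 0
    have diff_eq := Gamma_add_one_div_Gamma_add_one_sub_Gamma_div_Gamma hz_ne (z + r)
    rw [Function.iterate_succ_apply', fwdDiff, ih hz_succ, ih hz, ← mul_sub, ← add_assoc,
      add_right_comm z 1, diff_eq, descPochhammer_succ_eval, Nat.cast_succ, ← add_assoc z]
    ring

lemma inv_Gamma_mul_Gamma_eq_choose_div_factorial {r s : ℕ} (hsr : s ≤ r) :
    (Complex.Gamma ((s : ℂ) + 1) * Complex.Gamma ((r : ℂ) - s + 1))⁻¹ =
      (r.choose s : ℂ) / r.factorial := by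
  have hr : (r.factorial : ℂ) ≠ 0 := mod_cast r.factorial_ne_zero
  rw [← Nat.cast_sub hsr, Complex.Gamma_nat_eq_factorial, Complex.Gamma_nat_eq_factorial,
    Nat.cast_choose ℂ hsr, div_div_cancel_left' hr]

lemma ne_neg_natCast_of_re_pos {z : ℂ} (hz : 0 < z.re) (k : ℕ) : z ≠ -k := by
  rintro rfl
  simp only [Complex.neg_re, Complex.natCast_re] at hz
  linarith [k.cast_nonneg (α := ℝ)]

-- Each `Gamma` in a denominator stands for the entire function `1 / Γ`: at the poles of `Γ`,
-- Mathlib's conventions `Gamma z = 0` and `x / 0 = 0` give `1 / Γ` its true value `0`.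
theorem stmt5_general (ν a : ℂ) (hν : ∀ k : ℕ, ν + a + 1 ≠ -k) (r : ℕ) :
    ∑ s ∈ range (r + 1),
      (-1) ^ s * Complex.Gamma (ν + s + a + 1) /
        (Complex.Gamma (ν + 1) * Complex.Gamma (s + 1) * Complex.Gamma (r - s + 1) *
          Complex.Gamma (s + a + 1)) =
    (-1) ^ r * Complex.Gamma (ν + a + 1) /
      (Complex.Gamma (ν - r + 1) * Complex.Gamma (r + a + 1) * Complex.Gamma (r + 1)) := by
  set g : ℂ → ℂ := fun w ↦ Complex.Gamma (ν + w) / Complex.Gamma w with hg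
  have term_eq : ∀ s ∈ range (r + 1),
      (-1) ^ s * Complex.Gamma (ν + s + a + 1) /
        (Complex.Gamma (ν + 1) * Complex.Gamma (s + 1) * Complex.Gamma (r - s + 1) *
          Complex.Gamma (s + a + 1)) =
      (Complex.Gamma (ν + 1))⁻¹ / r.factorial *
        ((-1) ^ s * (r.choose s : ℂ) * g (a + 1 + s)) := by
    intro s hs
    have hchoose := inv_Gamma_mul_Gamma_eq_choose_div_factorial (mem_range_succ_iff.mp hs)
    rw [hg, mul_assoc (Complex.Gamma (ν + 1)), div_eq_mul_inv, mul_inv, mul_inv, hchoose]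
    ring_nf
  have sum_eq : ∑ s ∈ range (r + 1), (-1) ^ s * (r.choose s : ℂ) * g (a + 1 + s) =
      (-1) ^ r * (Δ_[1])^[r] g (a + 1) := by
    simpa only [nsmul_one] using sum_neg_one_pow_mul_choose_mul_eq_fwdDiff_iter g 1 (a + 1) r
  rw [sum_congr rfl term_eq, ← mul_sum, sum_eq,
    fwdDiff_iter_Gamma_add_div_Gamma ν r (by simpa only [add_assoc] using hν),
    Complex.Gamma_nat_eq_factorial, div_eq_mul_inv _ (_ * _ * _), mul_inv, mul_inv,
    ← descPochhammer_eval_mul_inv_Gamma_add_one ν r]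
  ring_nf

theorem stmt5 (a : ℝ) (ha : -1 < a) (n r : ℕ) (hrn : r ≤ n) :
    ∑ s ∈ Finset.range (r+1),
      (-1:ℝ)^s * Real.Gamma ((n:ℝ) + s + a + 1) /
        (Real.Gamma ((n:ℝ)+1) * Real.Gamma ((s:ℝ)+1) * Real.Gamma ((r:ℝ) - s + 1) *
          Real.Gamma ((s:ℝ) + a + 1)) =
    (-1:ℝ)^r * Real.Gamma ((n:ℝ) + a + 1) /
      (Real.Gamma ((n:ℝ) - r + 1) * Real.Gamma ((r:ℝ) + a + 1) * Real.Gamma ((r:ℝ)+1)) := by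
  have re_pos : 0 < ((n : ℂ) + a + 1).re := by simpa using by linarith [n.cast_nonneg (α := ℝ)]
  apply Complex.ofReal_injective
  push_cast [← Complex.Gamma_ofReal]
  exact stmt5_general n a (ne_neg_natCast_of_re_pos re_pos) r
end

section
/- Let a > −1 and b > −1 be real numbers, n a natural number, and x a real number. Then ∑_{r=0}^{n} ∑_{s=0}^{r} (−1)^s · Γ(n+s+a+1)·Γ(n+b+1) / (Γ(n+1)·Γ(s+1)·Γ(r−s+1)·Γ(s+a+1)·Γ(n−r+b+1)) · ((1−x)/2)^r · ((1+x)/2)^{n−r} = ∑_{r=0}^{n} (−1)^r · Γ(n+a+1)·Γ(n+b+1) / (Γ(n−r+1)·Γ(r+a+1)·Γ(r+1)·Γ(n−r+b+1)) · ((1−x)/2)^r · ((1+x)/2)^{n−r}. (That is, the explicit representation of the Jacobi biorthogonal polynomial P_n^{(α,a,b)}(x) at α = 1 coincides with the classical representation of the Jacobi orthogonal polynomial P_n^{(a,b)}(x).) -/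
open Real Finset

/-!
After multiplication by `r!`, the inner sum over `s` is the `r`-th forward difference at `a + 1`,
up to the sign `(-1) ^ r`, of `Γ(y + n) / Γ(y)`. This quotient is the rising factorial `(y)_n`,
whose forward difference is `n (y + 1)_{n-1}`; hence its `r`-th difference is
`n! / (n - r)! * (y + r)_{n-r}`, and the two sides agree coefficient by coefficient.
-/

open Polynomial
open scoped Nat fwdDiff

section RisingFactorial

variable {R : Type*} [CommRing R]

lemma fwdDiff_ascPochhammer_eval_succ (n : ℕ) :
    Δ_[1] (fun y : R ↦ (ascPochhammer R (n + 1)).eval y) =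
      fun y ↦ (n + 1) * (ascPochhammer R n).eval (y + 1) := by
  ext y
  have h := congr_arg (eval y) (ascPochhammer_succ_comp_X_add_one (S := R) n)
  simp only [eval_comp, eval_add, eval_X, eval_one, nsmul_eq_mul] at h
  simp [fwdDiff, h]

-- For `n < r` both sides vanish, since `n.descFactorial r = 0`.
lemma fwdDiff_iter_ascPochhammer_eval (n r : ℕ) :
    Δ_[1] ^[r] (fun y : R ↦ (ascPochhammer R n).eval y) =
      fun y : R ↦ n.descFactorial r * (ascPochhammer R (n - r)).eval (y + r) := by
  induction r with
  | zero => simp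
  | succ r ih =>
    ext y
    rw [Function.iterate_succ_apply', ih, Nat.descFactorial_succ, ← Nat.sub_sub]
    rcases n - r with _ | k
    · simp [fwdDiff]
    · have h := congr_fun (fwdDiff_ascPochhammer_eval_succ (R := R) k) (y + r)
      simp only [fwdDiff] at h ⊢
      rw [← mul_sub, add_right_comm, h]
      push_cast
      ring_nf

lemma sum_neg_one_pow_mul_choose_mul_ascPochhammer_eval (n r : ℕ) (y : R) :
    ∑ s ∈ range (r + 1), (-1) ^ s * r.choose s * (ascPochhammer R n).eval (y + s) =
      (-1) ^ r * n.descFactorial r * (ascPochhammer R (n - r)).eval (y + r) := by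
  have h := fwdDiff_iter_eq_sum_shift 1 (fun y : R ↦ (ascPochhammer R n).eval y) r y
  rw [fwdDiff_iter_ascPochhammer_eval] at h
  beta_reduce at h
  rw [mul_assoc, h, mul_sum]
  refine sum_congr rfl fun s hs ↦ ?_
  have hsign : (-1 : R) ^ s = (-1) ^ r * (-1) ^ (r - s) := by
    obtain ⟨t, rfl⟩ := Nat.exists_eq_add_of_le (mem_range_succ_iff.1 hs)
    rw [Nat.add_sub_cancel_left, pow_add, mul_assoc, ← mul_pow]
    simp
  rw [hsign, zsmul_eq_mul, nsmul_one]
  push_cast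
  ring

end RisingFactorial

lemma sum_neg_one_pow_mul_Gamma_div {n r : ℕ} (hr : r ≤ n) {z : ℂ} (hz : ∀ k : ℕ, z ≠ -k) :
    ∑ s ∈ range (r + 1), (-1) ^ s * Complex.Gamma (n + s + z) /
        (Complex.Gamma (s + 1) * Complex.Gamma (r - s + 1) * Complex.Gamma (s + z)) =
      (-1) ^ r * Complex.Gamma (n + 1) * Complex.Gamma (n + z) /
        (Complex.Gamma (n - r + 1) * Complex.Gamma (r + z) * Complex.Gamma (r + 1)) := by
  have ratio (m s : ℕ) : Complex.Gamma (m + s + z) / Complex.Gamma (s + z) =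
      (ascPochhammer ℂ m).eval (z + s) := by
    rw [← Complex.Gamma_add_nat_div_Gamma_eq]
    · ring_nf
    · intro k hk
      exact hz (k + s) (by push_cast; linear_combination hk)
  have summand : ∀ s ∈ range (r + 1), (-1) ^ s * Complex.Gamma (n + s + z) /
        (Complex.Gamma (s + 1) * Complex.Gamma (r - s + 1) * Complex.Gamma (s + z)) =
      (-1) ^ s * r.choose s * (ascPochhammer ℂ n).eval (z + s) / r ! := by
    intro s hs
    have hsr := mem_range_succ_iff.1 hs
    have hrfac : (r ! : ℂ) ≠ 0 := mod_cast r.factorial_ne_zero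
    rw [← Nat.cast_sub hsr, ← ratio, Complex.Gamma_nat_eq_factorial,
      Complex.Gamma_nat_eq_factorial, Nat.cast_choose ℂ hsr]
    field
  have hdesc : (n.descFactorial r : ℂ) = n ! / (n - r)! := by
    rw [eq_div_iff (mod_cast (n - r).factorial_ne_zero), mul_comm]
    exact_mod_cast Nat.factorial_mul_descFactorial hr
  rw [sum_congr rfl summand, ← sum_div, sum_neg_one_pow_mul_choose_mul_ascPochhammer_eval, ← ratio,
    hdesc, ← Nat.cast_sub hr, ← Nat.cast_add, Nat.sub_add_cancel hr]
  simp only [Complex.Gamma_nat_eq_factorial]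
  field

theorem stmt6_general (a b : ℂ) (ha : ∀ k : ℕ, a + 1 ≠ -k) (_hb : ∀ k : ℕ, b + 1 ≠ -k) (n : ℕ)
    (x : ℂ) :
    ∑ r ∈ range (n + 1), ∑ s ∈ range (r + 1),
      (-1) ^ s * Complex.Gamma (n + s + a + 1) * Complex.Gamma (n + b + 1) /
        (Complex.Gamma (n + 1) * Complex.Gamma (s + 1) * Complex.Gamma (r - s + 1) *
          Complex.Gamma (s + a + 1) * Complex.Gamma (n - r + b + 1)) *
      ((1 - x) / 2) ^ r * ((1 + x) / 2) ^ (n - r) =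
    ∑ r ∈ range (n + 1),
      (-1) ^ r * Complex.Gamma (n + a + 1) * Complex.Gamma (n + b + 1) /
        (Complex.Gamma (n - r + 1) * Complex.Gamma (r + a + 1) * Complex.Gamma (r + 1) *
          Complex.Gamma (n - r + b + 1)) *
      ((1 - x) / 2) ^ r * ((1 + x) / 2) ^ (n - r) := by
  refine sum_congr rfl fun r hr ↦ ?_
  have hcoeff := congr_arg
    (· * (Complex.Gamma (n + b + 1) / (Complex.Gamma (n + 1) * Complex.Gamma (n - r + b + 1))))
    (sum_neg_one_pow_mul_Gamma_div (mem_range_succ_iff.1 hr) ha)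
  simp only [sum_mul, ← add_assoc] at hcoeff
  have hn : Complex.Gamma (n + 1) ≠ 0 := by
    rw [Complex.Gamma_nat_eq_factorial]
    exact_mod_cast n.factorial_ne_zero
  rw [← sum_mul, ← sum_mul]
  congr 2
  calc
    _ = _ := sum_congr rfl fun s _ ↦ by field
    _ = _ := hcoeff
    _ = _ := by field

theorem stmt6 (a b : ℝ) (ha : -1 < a) (hb : -1 < b) (n : ℕ) (x : ℝ) :
    ∑ r ∈ Finset.range (n+1), ∑ s ∈ Finset.range (r+1),
      (-1:ℝ)^s * Real.Gamma ((n:ℝ) + s + a + 1) * Real.Gamma ((n:ℝ) + b + 1) /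
        (Real.Gamma ((n:ℝ)+1) * Real.Gamma ((s:ℝ)+1) * Real.Gamma ((r:ℝ) - s + 1) *
          Real.Gamma ((s:ℝ) + a + 1) * Real.Gamma ((n:ℝ) - r + b + 1)) *
      ((1-x)/2)^r * ((1+x)/2)^(n-r) =
    ∑ r ∈ Finset.range (n+1),
      (-1:ℝ)^r * Real.Gamma ((n:ℝ) + a + 1) * Real.Gamma ((n:ℝ) + b + 1) /
        (Real.Gamma ((n:ℝ) - r + 1) * Real.Gamma ((r:ℝ) + a + 1) * Real.Gamma ((r:ℝ)+1) *
          Real.Gamma ((n:ℝ) - r + b + 1)) *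
      ((1-x)/2)^r * ((1+x)/2)^(n-r) := by
  have ne_neg_nat {c : ℝ} (hc : -1 < c) (k : ℕ) : (c : ℂ) + 1 ≠ -k := by
    have hne : c + 1 ≠ -(k : ℝ) := by linarith [k.cast_nonneg (α := ℝ)]
    exact_mod_cast hne
  apply Complex.ofReal_injective
  simpa [← Complex.Gamma_ofReal] using stmt6_general a b (ne_neg_nat ha) (ne_neg_nat hb) n x
end
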